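/- arXiv:2411.16307 — 2 statements merged into one kernel-verified Lean document; each statement's English description precedes it below -/
import Mathlib

section
/- There are exactly 1504 isomorphism classes of Steiner triple systems S of order 27 such that S has exactly one Veblen point x and the quotient system of S at x (a Steiner triple system of order 13) admits no automorphism of order 13 (i.e., the quotient is the non-cyclic STS(13)). -/
/-!
A Steiner triple system is handled as its Steiner quasigroup (`IsSquag`), in which `m a b` is the
third point of the triple through `a ≠ b`. The count rests on three facts.

*The quotient.* At a Veblen point `x` the involution `a ↦ m x a` can be moved out of products
(`IsVeb.mul_act`), so the triples through `x` form a Steiner quasigroup (`exists_quotient`), of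
order 13 if the system has order 27. There are only two systems of order 13
(`classification13`): a backtracking search over partial systems, evaluated by the kernel
(`search_true`) and proved sound (`search_sound`), matches every complete system with one of two
models. The cyclic model has an automorphism of order 13. The automorphism group of the other
model `N` has order 6 (`aut_eq_rho`). So the quotient must be `N`.

*The extensions.* A choice of representatives of the triples through `x` turns the system into an
extension `extOp F` of `N`, where `F` assigns an element of `ZMod 2` to each of the 26 triples of
`N` (`exists_ext`). Conversely the added point of any extension is its only Veblen point, as `N`
has none (`isVeb_ext_iff`), and the quotient there is `N` (`quotient_ext`). Two extensions are
isomorphic iff their cocycles differ by an automorphism of `N` and a coboundary, that is, a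
function `{p, q, r} ↦ γ p + γ q + γ r` (`ext_iso_iff`).

*The count.* The triples of `N` split into two invariant sets of 13 such that coboundaries take
arbitrary prescribed values on the first set, each from exactly one `γ` (`delta_injective`,
`delta_surjective`). Hence each cocycle can be made zero there, and the isomorphism classes
correspond to the orbits of the automorphism group, dihedral of order 6, on the functions from the
second set to `ZMod 2` (`exists_nf`, `nf_iso_iff`). By Burnside's lemma their number is
`(2 ^ 13 + 2 * 2 ^ 5 + 3 * 2 ^ 8) / 6 = 1504` (`card_orbits`).
-/

universe u v

/-- `T` is the triple set of a Steiner triple system on the point set `α`: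
every member of `T` has three elements, and every pair of distinct points
lies in exactly one member of `T`. -/
def IsSTS {α : Type u} (T : Set (Finset α)) : Prop :=
  (∀ t ∈ T, t.card = 3) ∧
  ∀ a b : α, a ≠ b → ∃! t : Finset α, t ∈ T ∧ a ∈ t ∧ b ∈ t

/-- `x` is a Veblen point of the Steiner triple system with triple set `T`:
whenever `{x,a,b}`, `{x,c,d}` and `{t,a,c}` are triples, so is `{t,b,d}`. -/
def IsVeblen {α : Type u} [DecidableEq α] (T : Set (Finset α)) (x : α) : Prop :=
  ∀ a b c d t : α, ({x, a, b} : Finset α) ∈ T → ({x, c, d} : Finset α) ∈ T →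
    ({t, a, c} : Finset α) ∈ T → ({t, b, d} : Finset α) ∈ T

/-- Isomorphism of Steiner triple systems: a bijection of the point sets carrying
the triples of one system exactly onto the triples of the other. -/
def STSIso {α : Type u} {β : Type v} [DecidableEq β]
    (T₁ : Set (Finset α)) (T₂ : Set (Finset β)) : Prop :=
  ∃ e : α ≃ β, ∀ t : Finset α, t ∈ T₁ ↔ t.image (e : α → β) ∈ T₂

/-- The points of the quotient system at a point `x`: the triples through `x`. -/
abbrev QuotPts {α : Type u} (T : Set (Finset α)) (x : α) : Type u :=
  {t : Finset α // t ∈ T ∧ x ∈ t}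

/-- The triples of the quotient system at a Veblen point `x`: three distinct
triples `T1`, `T2`, `T3` through `x` form a triple iff there are `a ∈ T1 \ {x}`
and `c ∈ T2 \ {x}` such that the third point of the triple through `a` and `c`
lies in `T3`. -/
def QuotTriples {α : Type u} [DecidableEq α] (T : Set (Finset α)) (x : α) :
    Set (Finset (QuotPts T x)) :=
  {b | ∃ T1 T2 T3 : QuotPts T x, T1 ≠ T2 ∧ T1 ≠ T3 ∧ T2 ≠ T3 ∧ b = {T1, T2, T3} ∧
      ∃ a ∈ T1.1, a ≠ x ∧ ∃ c ∈ T2.1, c ≠ x ∧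
        ∃ d, ({a, c, d} : Finset α) ∈ T ∧ d ∈ T3.1}

/-- The nonzero vectors of `GF(2)^n`, i.e. the points of `PG(n-1,2)`. -/
abbrev PGPt (n : ℕ) : Type := {u : Fin n → ZMod 2 // u ≠ 0}

/-- The lines of `PG(n-1,2)`: sets `{u,v,w}` of distinct nonzero vectors of
`GF(2)^n` with `u + v + w = 0`. -/
def PGTriples (n : ℕ) : Set (Finset (PGPt n)) :=
  {t | ∃ u v w : PGPt n, u ≠ v ∧ u ≠ w ∧ v ≠ w ∧ t = {u, v, w} ∧
      u.1 + v.1 + w.1 = 0}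

/-- The system contains a Pasch configuration: six distinct points
`x, a, b, c, d, t` with `{x,a,b}`, `{x,c,d}`, `{t,a,c}`, `{t,b,d}` all triples. -/
def HasPasch {α : Type u} [DecidableEq α] (T : Set (Finset α)) : Prop :=
  ∃ x a b c d t : α, ({x, a, b, c, d, t} : Finset α).card = 6 ∧
    ({x, a, b} : Finset α) ∈ T ∧ ({x, c, d} : Finset α) ∈ T ∧
    ({t, a, c} : Finset α) ∈ T ∧ ({t, b, d} : Finset α) ∈ T

/-! ### Steiner quasigroups -/

/-- A Steiner quasigroup (squag): `m a b` plays the role of the third point of the triple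
through `a ≠ b`, and `m a a = a`. -/
structure IsSquag {α : Type u} (m : α → α → α) : Prop where
  idem : ∀ a, m a a = a
  comm : ∀ a b, m a b = m b a
  inv : ∀ a b, m a (m a b) = b

/-- The triples `{a, b, m a b}` of a Steiner quasigroup. -/
def triples {α : Type u} [DecidableEq α] (m : α → α → α) : Set (Finset α) :=
  {t | ∃ a b, a ≠ b ∧ t = {a, b, m a b}}

/-- `m` and `m'` are isomorphic as quasigroups. -/
def SquagIso {α : Type u} {β : Type v} (m : α → α → α) (m' : β → β → β) : Prop :=
  ∃ e : α ≃ β, ∀ a b, e (m a b) = m' (e a) (e b)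

namespace IsSquag

variable {α : Type u} {m : α → α → α}

theorem inv' (h : IsSquag m) (a b : α) : m (m a b) b = a := by
  rw [h.comm, h.comm a b, h.inv]

theorem cancel (h : IsSquag m) {a b c : α} (e : m a b = m a c) : b = c := by
  rw [← h.inv a b, e, h.inv]

theorem eq_left (h : IsSquag m) {a b : α} (e : m a b = a) : a = b := by
  have := h.inv a b
  rwa [e, h.idem] at this

theorem eq_right (h : IsSquag m) {a b : α} (e : m a b = b) : a = b :=
  (h.eq_left (by rwa [h.comm] at e)).symm

theorem swap12 (h : IsSquag m) {a b c : α} (e : m a b = c) : m b a = c := by rw [h.comm, e]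

theorem swap23 (h : IsSquag m) {a b c : α} (e : m a b = c) : m a c = b := by rw [← e, h.inv]

variable [DecidableEq α]

theorem mem_triples (h : IsSquag m) {a b c : α} :
    ({a, b, c} : Finset α) ∈ triples m ↔ a ≠ b ∧ m a b = c := by
  constructor
  · rintro ⟨p, q, hpq, e⟩
    have h1 : p ≠ m p q := fun k => hpq (h.eq_left k.symm)
    have h2 : q ≠ m p q := fun k => hpq (h.eq_right k.symm)
    have hc : ({a, b, c} : Finset α).card = 3 := by
      rw [e]; exact Finset.card_eq_three.2 ⟨p, q, _, hpq, h1, h2, rfl⟩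
    obtain ⟨hab, hac, hbc⟩ : a ≠ b ∧ a ≠ c ∧ b ≠ c := by
      refine ⟨?_, ?_, ?_⟩ <;> rintro rfl
      · rw [Finset.insert_eq_of_mem (by simp)] at hc
        exact absurd hc (by have := Finset.card_le_two (a := a) (b := c); omega)
      · rw [Finset.insert_eq_of_mem (by simp)] at hc
        exact absurd hc (by have := Finset.card_le_two (a := b) (b := a); omega)
      · rw [Finset.pair_eq_singleton] at hc
        exact absurd hc (by have := Finset.card_le_two (a := a) (b := b); omega)
    refine ⟨hab, ?_⟩
    have ha : a ∈ ({p, q, m p q} : Finset α) := by rw [← e]; simp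
    have hb : b ∈ ({p, q, m p q} : Finset α) := by rw [← e]; simp
    have hcc : c ∈ ({p, q, m p q} : Finset α) := by rw [← e]; simp
    simp only [Finset.mem_insert, Finset.mem_singleton] at ha hb hcc
    have e1 := h.swap12 (rfl : m p q = _)
    have e2 := h.swap23 (rfl : m p q = _)
    have e3 := h.swap12 e2
    have e4 := h.swap23 e1
    have e5 := h.swap12 e4
    rcases ha with rfl | rfl | rfl <;> rcases hb with rfl | rfl | rfl <;>
      rcases hcc with rfl | rfl | rfl <;> first | assumption | rfl | contradiction
  · rintro ⟨hab, rfl⟩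
    exact ⟨a, b, hab, rfl⟩

theorem isSTS (h : IsSquag m) : IsSTS (triples m) := by
  refine ⟨?_, ?_⟩
  · rintro t ⟨a, b, hab, rfl⟩
    exact Finset.card_eq_three.2 ⟨a, b, _, hab, fun k => hab (h.eq_left k.symm),
      fun k => hab (h.eq_right k.symm), rfl⟩
  · intro a b hab
    refine ⟨{a, b, m a b}, ⟨⟨a, b, hab, rfl⟩, by simp, by simp⟩, ?_⟩
    rintro t ⟨⟨p, q, hpq, rfl⟩, ha, hb⟩
    have e1 := h.swap12 (rfl : m p q = _)
    have e2 := h.swap23 (rfl : m p q = _)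
    have e3 := h.swap12 e2
    have e4 := h.swap23 e1
    have e5 := h.swap12 e4
    simp only [Finset.mem_insert, Finset.mem_singleton] at ha hb
    rcases ha with rfl | rfl | rfl <;> rcases hb with rfl | rfl | rfl <;>
      first
      | contradiction
      | (ext z; simp only [Finset.mem_insert, Finset.mem_singleton, *] <;> tauto)

end IsSquag

/-- Every Steiner triple system comes from a Steiner quasigroup. -/
theorem IsSTS.exists_squag {α : Type u} [DecidableEq α] {T : Set (Finset α)} (hT : IsSTS T) :
    ∃ m : α → α → α, IsSquag m ∧ T = triples m := by
  obtain ⟨h3, hu⟩ := hT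
  have key : ∀ a b : α, ∃ c, (a = b → c = a) ∧ (a ≠ b → ({a, b, c} : Finset α) ∈ T) := by
    intro a b
    by_cases hab : a = b
    · exact ⟨a, by simp, fun k => absurd hab k⟩
    · obtain ⟨t, ⟨ht, ha, hb⟩, -⟩ := hu a b hab
      have h1 : (t \ {a, b}).card = 1 := by
        rw [Finset.card_sdiff_of_subset (by simp [Finset.insert_subset_iff, ha, hb]), h3 t ht,
          Finset.card_pair hab]
      obtain ⟨c, hc⟩ := Finset.card_eq_one.1 h1
      refine ⟨c, fun k => absurd k hab, fun _ => ?_⟩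
      have : t = {a, b, c} := by
        rw [← Finset.sdiff_union_of_subset
          (show ({a, b} : Finset α) ⊆ t by simp [Finset.insert_subset_iff, ha, hb]), hc]
        ext z; simp; tauto
      rwa [← this]
  choose m hm1 hm2 using key
  have dist : ∀ a b c : α, ({a, b, c} : Finset α) ∈ T → a ≠ b ∧ a ≠ c ∧ b ≠ c := by
    intro a b c h
    have hc := h3 _ h
    refine ⟨?_, ?_, ?_⟩ <;> rintro rfl
    · rw [Finset.insert_eq_of_mem (by simp)] at hc
      exact absurd hc (by have := Finset.card_le_two (a := a) (b := c); omega)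
    · rw [Finset.insert_eq_of_mem (by simp)] at hc
      exact absurd hc (by have := Finset.card_le_two (a := b) (b := a); omega)
    · rw [Finset.pair_eq_singleton] at hc
      exact absurd hc (by have := Finset.card_le_two (a := a) (b := b); omega)
  have uniq : ∀ a b c : α, ({a, b, c} : Finset α) ∈ T → m a b = c := by
    intro a b c h
    obtain ⟨hab, hac, hbc⟩ := dist a b c h
    have e := (hu a b hab).unique ⟨h, by simp, by simp⟩ ⟨hm2 a b hab, by simp, by simp⟩
    have : c ∈ ({a, b, m a b} : Finset α) := by rw [← e]; simp
    simp only [Finset.mem_insert, Finset.mem_singleton] at this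
    rcases this with k | k | k
    · exact absurd k.symm hac
    · exact absurd k.symm hbc
    · exact k.symm
  refine ⟨m, ⟨fun a => hm1 a a rfl, fun a b => ?_, fun a b => ?_⟩, ?_⟩
  · by_cases hab : a = b
    · rw [hab]
    · apply uniq
      rw [Finset.insert_comm]
      exact hm2 b a (Ne.symm hab)
  · by_cases hab : a = b
    · subst hab; rw [hm1 a a rfl, hm1 a a rfl]
    · apply uniq
      rw [Finset.pair_comm]
      exact hm2 a b hab
  · ext t
    constructor
    · intro ht
      obtain ⟨a, b, c, hab, hac, hbc, rfl⟩ := Finset.card_eq_three.1 (h3 t ht)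
      exact ⟨a, b, hab, by rw [uniq a b c ht]⟩
    · rintro ⟨a, b, hab, rfl⟩
      exact hm2 a b hab

theorem image_triple {α : Type u} {β : Type v} [DecidableEq α] [DecidableEq β] (e : α → β)
    (a b c : α) : ({a, b, c} : Finset α).image e = {e a, e b, e c} := by
  simp [Finset.image_insert]

/-- The bijections carrying triples onto triples are the quasigroup isomorphisms. -/
theorem preserves_iff {α : Type u} {β : Type v} [DecidableEq α] [DecidableEq β]
    {m : α → α → α} {m' : β → β → β} (h : IsSquag m) (h' : IsSquag m') (e : α ≃ β) :
    (∀ t : Finset α, t ∈ triples m ↔ t.image (e : α → β) ∈ triples m') ↔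
      ∀ a b, e (m a b) = m' (e a) (e b) := by
  constructor
  · intro k a b
    by_cases hab : a = b
    · subst hab; rw [h.idem, h'.idem]
    · have := (k {a, b, m a b}).1 ⟨a, b, hab, rfl⟩
      rw [image_triple, h'.mem_triples] at this
      exact this.2.symm
  · intro k t
    constructor
    · rintro ⟨a, b, hab, rfl⟩
      rw [image_triple, h'.mem_triples, k]
      exact ⟨fun z => hab (e.injective z), rfl⟩
    · rintro ⟨p, q, hpq, ht⟩
      refine ⟨e.symm p, e.symm q, fun z => hpq (e.symm.injective z), ?_⟩
      apply Finset.image_injective e.injective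
      rw [ht, image_triple, k]
      simp

theorem stsIso_iff {α : Type u} {β : Type v} [DecidableEq α] [DecidableEq β]
    {m : α → α → α} {m' : β → β → β} (h : IsSquag m) (h' : IsSquag m') :
    STSIso (triples m) (triples m') ↔ SquagIso m m' := by
  unfold STSIso SquagIso
  simp only [preserves_iff h h']

theorem isVeblen_iff {α : Type u} [DecidableEq α] {m : α → α → α} (h : IsSquag m) (x : α) :
    IsVeblen (triples m) x ↔
      ∀ a c, a ≠ x → c ≠ x → a ≠ c → c ≠ m x a → m (m x a) (m x c) = m a c := by
  unfold IsVeblen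
  simp only [h.mem_triples]
  constructor
  · intro k a c ha hc hac _
    have := k a (m x a) c (m x c) (m a c) ⟨ha.symm, rfl⟩ ⟨hc.symm, rfl⟩
      ⟨fun z => hac (h.eq_left z), by rw [h.comm, h.inv]⟩
    exact h.swap23 (h.swap12 this.2)
  · rintro k a b c d t ⟨hxa, rfl⟩ ⟨hxc, rfl⟩ ⟨hta, htc⟩
    have htc' : m a c = t := h.swap23 (h.swap12 htc)
    have hac : a ≠ c := fun z => by subst z; exact hta (by rw [← htc', h.idem])
    by_cases hc : c = m x a
    · have hcx : m x c = a := h.swap23 hc.symm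
      have htx : t = x := by
        rw [← htc', hc]
        exact h.swap12 (h.inv' x a)
      rw [htx, hcx, ← hc]
      exact ⟨hxc, hcx⟩
    · have := k a c hxa.symm hxc.symm hac hc
      have e : m (m x a) t = m x c := h.swap23 (this.trans htc')
      refine ⟨fun z => ?_, h.swap12 e⟩
      rw [z, h.idem] at e
      exact hac (h.cancel e)

/-! ### The two systems of order 13 -/

/-- Multiplication table of the non-cyclic `STS(13)`, as hexadecimal digits: the product of `a`
and `b` is the digit of weight `16 ^ (13 a + b)`. The labelling is chosen so that the
automorphism group permutes `0, …, 5` regularly, `6, 7, 8` and `9, 10, 11` naturally, and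
fixes `12`. -/
def tblN : ℕ :=
  245512171874645366593628726563756260328261824369717436258862523091938045640955882286426110915501102992435312539028927483273979859639146555608391458572215184800610990847506141156385166268408402441050769504

/-- Multiplication table of the cyclic `STS(13)`, with triples `{i, i+1, i+4}` and
`{i, i+2, i+7}` modulo `13`. -/
def tblC : ℕ :=
  237943079500225899538574337104929078485087876649892318374779498357149452722289201589483932110528117637756372028183316016453131540789771701094439444899969385087432156584464306615974064995298067562821175104

/-- Table lookup. Here and below the natural number operations are written without their
type class wrappers, so that the kernel evaluates them at once. -/
def opT (t a b : ℕ) : ℕ :=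
  Nat.land (Nat.shiftRight t (Nat.mul 4 (Nat.add (Nat.mul 13 a) b))) 15

/-- The operation on `Fin 13` given by a table. -/
def opF (t : ℕ) (a b : Fin 13) : Fin 13 := Fin.ofNat 13 (opT t a b)

theorem isSquag_N : IsSquag (opF tblN) :=
  ⟨by decide +kernel, by decide +kernel, by decide +kernel⟩

theorem isSquag_C : IsSquag (opF tblC) :=
  ⟨by decide +kernel, by decide +kernel, by decide +kernel⟩

theorem opT_lt_N : ∀ a b : Fin 13, opT tblN a b < 13 := by decide +kernel

theorem opT_lt_C : ∀ a b : Fin 13, opT tblC a b < 13 := by decide +kernel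

/-! ### A search program for systems of order 13

The program names the points of an unknown system `0, 1, 2, …` in the order in which they are
met. A state consists of the number `k` of points named so far, a bit mask `M` of the ordered
pairs of names whose triple is known (together with the diagonal), the list `bl` of known
triples, and a list of candidate isomorphisms onto the two model systems. -/

/-- `forceNat n f = f n`; the kernel evaluates `n` to a numeral before entering `f`. -/
noncomputable def forceNat (n : ℕ) (f : ℕ → Bool) : Bool :=
  Nat.rec (f 0) (fun n _ => f (Nat.succ n)) n

theorem forceNat_eq (n : ℕ) (f : ℕ → Bool) : forceNat n f = f n := by
  cases n <;> rfl

/-- `p` holds for all natural numbers below `n`. -/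
noncomputable def allBelow (n : ℕ) (p : ℕ → Bool) : Bool :=
  Nat.rec true (fun n ih => p n && ih) n

theorem allBelow_spec {n : ℕ} {p : ℕ → Bool} (h : allBelow n p = true) :
    ∀ i < n, p i = true := by
  induction n with
  | zero => intro i hi; omega
  | succ n ih =>
    have h' : (p n && allBelow n p) = true := h
    rw [Bool.and_eq_true] at h'
    intro i hi
    rcases Nat.lt_succ_iff_lt_or_eq.1 hi with k | k
    · exact ih h'.2 i k
    · rw [k]; exact h'.1

/-- A candidate map from names to points of a model, stored as hexadecimal digits; this reads
off the image of the name `a`. -/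
def nib (ψ a : ℕ) : ℕ := Nat.land (Nat.shiftRight ψ (Nat.mul 4 a)) 15

/-- The model a candidate maps to: bit 52, above the 13 digits, marks the cyclic system. -/
def tblOf (ψ : ℕ) : ℕ := bif Nat.ble (Nat.pow 2 52) ψ then tblC else tblN

/-- The pair `(a, b)` is marked in the mask `M`. -/
def cov (M a b : ℕ) : Bool :=
  Nat.beq (Nat.land (Nat.shiftRight M (Nat.add (Nat.mul 13 a) b)) 1) 1

/-- The number of ones among the 13 low bits of `u`, by the usual trick of spreading them over
hexadecimal digits (with the factor `1 + 2 ^ 15 + 2 ^ 30 + 2 ^ 45` and the mask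
`(16 ^ 15 - 1) / 15`) and casting out fifteens; used only to choose where to branch. -/
def popcount13 (u : ℕ) : ℕ :=
  Nat.mod (Nat.land (Nat.mul u 35185445863425) 76861433640456465) 15

/-- The set (as a mask) of names `b < k` for which `(a, b)` is not marked. -/
def unc (k M a : ℕ) : ℕ :=
  Nat.sub (Nat.pow 2 k)
    (Nat.succ (Nat.land (Nat.shiftRight M (Nat.mul 13 a)) (Nat.pred (Nat.pow 2 k))))

/-- Passes to `K` an unmarked pair whose first component has as few unmarked partners as
possible, or calls `E` when all pairs are marked. -/
noncomputable def selRow (k M n : ℕ) :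
    ℕ → ℕ → ℕ → (ℕ → ℕ → Bool) → (Unit → Bool) → Bool :=
  Nat.rec
    (fun bc ba bu K E =>
      bif Nat.beq bc 99 then E () else forceNat (Nat.log2 bu) fun b => K ba b)
    (fun a ih bc ba bu K E =>
      forceNat (unc k M a) fun u =>
        bif Nat.beq u 0 then ih bc ba bu K E
        else forceNat (popcount13 u) fun p =>
          bif Nat.ble p bc then ih p a u K E else ih bc ba bu K E) n

/-- Whatever pair is selected, a successful run has succeeded in one of the continuations; the
quality of the selection is irrelevant for correctness. -/
theorem selRow_spec (k M n : ℕ) : ∀ (bc ba bu : ℕ) (K : ℕ → ℕ → Bool) (E : Unit → Bool),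
    selRow k M n bc ba bu K E = true → (∃ a b, K a b = true) ∨ E () = true := by
  induction n with
  | zero =>
    intro bc ba bu K E h
    have h' : (bif Nat.beq bc 99 then E () else forceNat (Nat.log2 bu) fun b => K ba b) = true :=
      h
    rw [forceNat_eq] at h'
    cases hb : Nat.beq bc 99 <;> rw [hb] at h'
    · exact Or.inl ⟨_, _, h'⟩
    · exact Or.inr h'
  | succ a ih =>
    intro bc ba bu K E h
    have h' : (forceNat (unc k M a) fun u =>
        bif Nat.beq u 0 then selRow k M a bc ba bu K E
        else forceNat (popcount13 u) fun p =>
          bif Nat.ble p bc then selRow k M a p a u K E else selRow k M a bc ba bu K E) = true := h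
    simp only [forceNat_eq] at h'
    revert h'
    cases Nat.beq (unc k M a) 0
    · cases Nat.ble (popcount13 (unc k M a)) bc
      · exact ih _ _ _ _ _
      · exact ih _ _ _ _ _
    · exact ih _ _ _ _ _

/-- Keeps the candidates compatible with the new triple `(a, b, c)`, extending them to `c` if
this is a new name, and passes the result to `K`. -/
noncomputable def filt (a b c k : ℕ) : List ℕ → (List ℕ → Bool) → Bool
  | [], K => K []
  | ψ :: l, K =>
    forceNat (opT (tblOf ψ) (nib ψ a) (nib ψ b)) fun d =>
      bif Nat.blt c k then
        bif Nat.beq d (nib ψ c) then filt a b c k l (fun r => K (ψ :: r)) else filt a b c k l K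
      else forceNat (Nat.add ψ (Nat.shiftLeft d (Nat.mul 4 c))) fun ψ' =>
        filt a b c k l (fun r => K (ψ' :: r))

theorem filt_spec (a b c k : ℕ) (l : List ℕ) : ∀ (K : List ℕ → Bool),
    filt a b c k l K = true → ∃ l', K l' = true := by
  induction l with
  | nil => intro K h; exact ⟨_, h⟩
  | cons ψ l ih =>
    intro K h
    rw [filt] at h
    simp only [forceNat_eq] at h
    revert h
    cases Nat.blt c k
    · intro h
      obtain ⟨l', h'⟩ := ih _ h
      exact ⟨_, h'⟩
    · cases Nat.beq (opT (tblOf ψ) (nib ψ a) (nib ψ b)) (nib ψ c)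
      · exact ih _
      · intro h
        obtain ⟨l', h'⟩ := ih _ h
        exact ⟨_, h'⟩

/-- The candidate `ψ` is an injective map into its model respecting all triples of `bl`. -/
noncomputable def leafOK (bl : List (ℕ × ℕ × ℕ)) (ψ : ℕ) : Bool :=
  (bl.all fun t => Nat.beq (opT (tblOf ψ) (nib ψ t.1) (nib ψ t.2.1)) (nib ψ t.2.2)) &&
  allBelow 13 fun a =>
    Nat.blt (nib ψ a) 13 && allBelow a fun b => !Nat.beq (nib ψ a) (nib ψ b)

/-- The two bits of the pair `{a, b}`. -/
def bit2 (a b : ℕ) : ℕ :=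
  Nat.lor (Nat.pow 2 (Nat.add (Nat.mul 13 a) b)) (Nat.pow 2 (Nat.add (Nat.mul 13 b) a))

/-- Marks all pairs of the triple `{a, b, c}`. -/
def addBlock (M a b c : ℕ) : ℕ :=
  Nat.lor (Nat.lor M (bit2 a b)) (Nat.lor (bit2 a c) (bit2 b c))

/-- Backtracking over all ways to complete a state, with recursion depth `n`. It returns `true`
only if every complete system reached is matched by a candidate. The third point `c` of a
selected pair is an old name or the next new one; if no pair is left but fewer than 13 points
have been named, an arbitrary unnamed point receives the next name. -/
noncomputable def search (n : ℕ) : ℕ → ℕ → List (ℕ × ℕ × ℕ) → List ℕ → Bool :=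
  Nat.rec (fun _ _ _ _ => false) (fun _ ih k M bl cs =>
    selRow k M k 99 0 0
      (fun a b => Nat.blt a k && Nat.blt b k && !cov M a b &&
        allBelow (bif Nat.blt k 13 then Nat.succ k else 13) fun c => cov M a c || cov M b c ||
          forceNat (addBlock M a b c) fun M' =>
          forceNat (bif Nat.blt c k then k else Nat.succ k) fun k' =>
          filt a b c k cs fun cs' => ih k' M' ((a, b, c) :: bl) cs')
      (fun _ => bif Nat.blt k 13 then ih (Nat.succ k) M bl cs
        else Nat.beq M (Nat.pred (Nat.pow 2 169)) && cs.any (leafOK bl))) n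

/-- The mask of the diagonal. -/
def diagMask : ℕ := (List.range 13).foldl (fun m a => m ||| 2 ^ (14 * a)) 0

/-- Initial candidates, prescribing the images of the names `0`, `1` and `3` (the name `2` will
be the product of `0` and `1`). Up to automorphisms of the models these are all possibilities. -/
def cands : List ℕ :=
  ([0, 6, 9, 12].flatMap fun p => (List.range 13).flatMap fun q =>
    (List.range 13).filterMap fun r =>
      if p = q ∨ p = r ∨ q = r ∨ opT tblN p q = r then none
      else some (p + q * 16 + r * 16 ^ 3)) ++
  ([1, 2, 4, 7].flatMap fun q => (List.range 13).filterMap fun r =>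
    if 0 = r ∨ q = r ∨ opT tblC 0 q = r then none
    else some (q * 16 + r * 16 ^ 3 + 2 ^ 52))

set_option maxRecDepth 100000 in
theorem search_true : search 45 0 diagMask [] cands = true := by decide +kernel

/-! ### Correctness of the search -/

theorem cov_eq (M a b : ℕ) : cov M a b = M.testBit (13 * a + b) := by
  change Nat.beq ((M >>> (13 * a + b)) &&& 1) 1 = _
  rw [Nat.testBit, Nat.and_comm 1]
  have h : (M >>> (13 * a + b)) &&& 1 = 0 ∨ (M >>> (13 * a + b)) &&& 1 = 1 := by
    rw [Nat.and_one_is_mod]; omega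
  rcases h with h | h <;> rw [h] <;> rfl

theorem testBit_bit2 (a b n : ℕ) :
    (bit2 a b).testBit n = (decide (13 * a + b = n) || decide (13 * b + a = n)) := by
  change (2 ^ (13 * a + b) ||| 2 ^ (13 * b + a)).testBit n = _
  rw [Nat.testBit_or, Nat.testBit_two_pow, Nat.testBit_two_pow]

theorem cov_addBlock (M a b c x y : ℕ) : cov (addBlock M a b c) x y = true ↔
    cov M x y = true ∨ (13 * a + b = 13 * x + y ∨ 13 * b + a = 13 * x + y) ∨
      (13 * a + c = 13 * x + y ∨ 13 * c + a = 13 * x + y) ∨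
      (13 * b + c = 13 * x + y ∨ 13 * c + b = 13 * x + y) := by
  rw [cov_eq, cov_eq]
  change ((M ||| bit2 a b) ||| (bit2 a c ||| bit2 b c)).testBit _ = true ↔ _
  simp only [Nat.testBit_or, testBit_bit2, Bool.or_eq_true, decide_eq_true_eq]
  tauto

/-- `(a, b, c)` is, up to order, one of the recorded triples. -/
def Known (bl : List (ℕ × ℕ × ℕ)) (a b c : ℕ) : Prop :=
  (a, b, c) ∈ bl ∨ (a, c, b) ∈ bl ∨ (b, a, c) ∈ bl ∨ (b, c, a) ∈ bl ∨ (c, a, b) ∈ bl ∨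
    (c, b, a) ∈ bl

theorem Known.swap23 {bl : List (ℕ × ℕ × ℕ)} {a b c : ℕ} (h : Known bl a b c) :
    Known bl a c b := by
  unfold Known at *; tauto

theorem Known.swap12 {bl : List (ℕ × ℕ × ℕ)} {a b c : ℕ} (h : Known bl a b c) :
    Known bl b a c := by
  unfold Known at *; tauto

theorem Known.cons {bl : List (ℕ × ℕ × ℕ)} {a b c : ℕ} {t : ℕ × ℕ × ℕ} (h : Known bl a b c) :
    Known (t :: bl) a b c := by
  unfold Known at *; simp only [List.mem_cons]; tauto

/-- The state `(k, M, bl)` describes part of the Steiner quasigroup `m` on `α` when the name `i`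
is given to the point `pt i`. -/
structure SearchInv {α : Type u} (m : α → α → α) (k M : ℕ) (bl : List (ℕ × ℕ × ℕ)) (pt : ℕ → α) :
    Prop where
  le : k ≤ 13
  inj : ∀ i < k, ∀ j < k, pt i = pt j → i = j
  lt : ∀ a b c, (a, b, c) ∈ bl → a < k ∧ b < k ∧ c < k
  mul : ∀ a b c, (a, b, c) ∈ bl → m (pt a) (pt b) = pt c
  cov : ∀ a < 13, ∀ b < 13, cov M a b = true ↔ a = b ∨ ∃ c, Known bl a b c

namespace SearchInv

variable {α : Type u} {m : α → α → α} {k M : ℕ} {bl : List (ℕ × ℕ × ℕ)} {pt : ℕ → α}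

theorem known_mul (h : SearchInv m k M bl pt) (hm : IsSquag m) {a b c : ℕ} (hk : Known bl a b c) :
    m (pt a) (pt b) = pt c := by
  rcases hk with e | e | e | e | e | e <;> have e := h.mul _ _ _ e
  · exact e
  · exact hm.swap23 e
  · exact hm.swap12 e
  · exact hm.swap12 (hm.swap23 e)
  · exact hm.swap23 (hm.swap12 e)
  · exact hm.swap12 (hm.swap23 (hm.swap12 e))

theorem known_lt (h : SearchInv m k M bl pt) {a b c : ℕ} (hk : Known bl a b c) :
    a < k ∧ b < k ∧ c < k := by
  rcases hk with e | e | e | e | e | e <;> have e := h.lt _ _ _ e <;> tauto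

/-- Naming a further point. -/
theorem extend (h : SearchInv m k M bl pt) (hk : k < 13) {x : α} (hx : ∀ i < k, pt i ≠ x) :
    SearchInv m (k + 1) M bl (Function.update pt k x) := by
  have old : ∀ i < k, Function.update pt k x i = pt i := fun i hi =>
    Function.update_of_ne (by omega) _ _
  refine ⟨hk, ?_, ?_, ?_, h.cov⟩
  · intro i hi j hj e
    rcases Nat.lt_succ_iff_lt_or_eq.1 hi with hi | rfl <;>
      rcases Nat.lt_succ_iff_lt_or_eq.1 hj with hj | rfl
    · rw [old i hi, old j hj] at e; exact h.inj i hi j hj e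
    · rw [old i hi, Function.update_self] at e; exact absurd e (hx i hi)
    · rw [old j hj, Function.update_self] at e; exact absurd e.symm (hx j hj)
    · rfl
  · intro a b c hc
    have := h.lt a b c hc
    omega
  · intro a b c hc
    obtain ⟨h1, h2, h3⟩ := h.lt a b c hc
    rw [old a h1, old b h2, old c h3]
    exact h.mul a b c hc

/-- Recording a further triple of named points. -/
theorem record (h : SearchInv m k M bl pt) {a b c : ℕ} (ha : a < k) (hb : b < k) (hc : c < k)
    (e : m (pt a) (pt b) = pt c) : SearchInv m k (addBlock M a b c) ((a, b, c) :: bl) pt := by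
  have hle := h.le
  refine ⟨h.le, h.inj, ?_, ?_, ?_⟩
  · intro x y z hz
    rcases List.mem_cons.1 hz with hz | hz
    · simp only [Prod.mk.injEq] at hz; omega
    · exact h.lt _ _ _ hz
  · intro x y z hz
    rcases List.mem_cons.1 hz with hz | hz
    · simp only [Prod.mk.injEq] at hz
      rw [hz.1, hz.2.1, hz.2.2, e]
    · exact h.mul _ _ _ hz
  · intro x hx y hy
    have pe : ∀ p q, q < k → (13 * p + q = 13 * x + y ↔ p = x ∧ q = y) := by
      intro p q hq; omega
    rw [cov_addBlock, h.cov x hx y hy, pe a b hb, pe b a ha, pe a c hc, pe c a ha, pe b c hc,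
      pe c b hb]
    have new : Known ((a, b, c) :: bl) a b c := Or.inl (by simp)
    constructor
    · rintro ((h1 | ⟨z, h1⟩) | (⟨rfl, rfl⟩ | ⟨rfl, rfl⟩) | (⟨rfl, rfl⟩ | ⟨rfl, rfl⟩) |
        (⟨rfl, rfl⟩ | ⟨rfl, rfl⟩))
      · exact Or.inl h1
      · exact Or.inr ⟨z, h1.cons⟩
      · exact Or.inr ⟨_, new⟩
      · exact Or.inr ⟨_, new.swap12⟩
      · exact Or.inr ⟨_, new.swap23⟩
      · exact Or.inr ⟨_, new.swap23.swap12⟩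
      · exact Or.inr ⟨_, new.swap12.swap23⟩
      · exact Or.inr ⟨_, new.swap12.swap23.swap12⟩
    · rintro (h1 | ⟨z, h1⟩)
      · exact Or.inl (Or.inl h1)
      · by_cases old : Known bl x y z
        · exact Or.inl (Or.inr ⟨z, old⟩)
        · right
          unfold Known at h1 old
          simp only [List.mem_cons, Prod.mk.injEq] at h1
          rcases h1 with (⟨rfl, rfl, rfl⟩ | h1) | (⟨rfl, rfl, rfl⟩ | h1) | (⟨rfl, rfl, rfl⟩ | h1) |
            (⟨rfl, rfl, rfl⟩ | h1) | (⟨rfl, rfl, rfl⟩ | h1) | (⟨rfl, rfl, rfl⟩ | h1) <;>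
            first
            | exact absurd h1 (by tauto)
            | simp

end SearchInv

/-- If the pair `{a, b}` is unmarked and `c` is its product, then `{a, c}` is unmarked. -/
theorem SearchInv.cov_third {α : Type u} {m : α → α → α} {k M : ℕ} {bl : List (ℕ × ℕ × ℕ)}
    {pt : ℕ → α} (h : SearchInv m k M bl pt) (hm : IsSquag m) {a b c : ℕ} (ha : a < k)
    (hb : b < k) (hc : c < k) (hab : _root_.cov M a b = false) (e : m (pt a) (pt b) = pt c) :
    _root_.cov M a c = false := by
  have hle := h.le
  have hab' : ¬ (a = b ∨ ∃ c, Known bl a b c) := by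
    rw [← h.cov a (by omega) b (by omega), hab]; simp
  rw [← Bool.not_eq_true, h.cov a (by omega) c (by omega)]
  rintro (rfl | ⟨d, hd⟩)
  · exact hab' (Or.inl (h.inj a ha b hb (hm.eq_left e)))
  · have e' : m (pt a) (pt c) = pt d := h.known_mul hm hd
    rw [hm.swap23 e] at e'
    have : b = d := h.inj b hb d (h.known_lt hd).2.2 e'
    subst this
    exact hab' (Or.inr ⟨c, hd.swap23⟩)

/-- A complete state matched by a candidate gives an isomorphism onto one of the models. -/
theorem SearchInv.leaf {α : Type u} [Fintype α] {m : α → α → α} {M : ℕ} {bl : List (ℕ × ℕ × ℕ)}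
    {pt : ℕ → α} (hm : IsSquag m) (hcard : Fintype.card α = 13) (h : SearchInv m 13 M bl pt)
    (hM : M = 2 ^ 169 - 1) {ψ : ℕ} (hψ : leafOK bl ψ = true) :
    SquagIso m (opF tblN) ∨ SquagIso m (opF tblC) := by
  rw [leafOK, Bool.and_eq_true, List.all_eq_true] at hψ
  obtain ⟨h1, h2⟩ := hψ
  have hlt : ∀ a < 13, nib ψ a < 13 := by
    intro a ha
    have := allBelow_spec h2 a ha
    rw [Bool.and_eq_true] at this
    exact Nat.le_of_ble_eq_true this.1
  have hne : ∀ a < 13, ∀ b < a, nib ψ a ≠ nib ψ b := by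
    intro a ha b hb e
    have := allBelow_spec h2 a ha
    rw [Bool.and_eq_true] at this
    have := allBelow_spec this.2 b hb
    rw [e] at this
    simp at this
  have hinj : Function.Injective fun a : Fin 13 => (⟨nib ψ a, hlt a a.2⟩ : Fin 13) := by
    intro a b e
    simp only [Fin.mk.injEq] at e
    rcases lt_trichotomy (a : ℕ) b with k | k | k
    · exact absurd e.symm (hne b b.2 a k)
    · exact Fin.ext k
    · exact absurd e (hne a a.2 b k)
  let f := Equiv.ofBijective _ (Finite.injective_iff_bijective.1 hinj)
  have hpt : Function.Bijective fun a : Fin 13 => pt a := by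
    rw [Fintype.bijective_iff_injective_and_card]
    exact ⟨fun a b e => Fin.ext (h.inj a a.2 b b.2 e), by simp [hcard]⟩
  let g := Equiv.ofBijective _ hpt
  have hcov : ∀ a b : Fin 13, a = b ∨ ∃ c, Known bl a b c := by
    intro a b
    have := (h.cov a a.2 b b.2).1 (by
      rw [cov_eq, hM, Nat.testBit_two_pow_sub_one]
      have := a.2
      have := b.2
      simp
      omega)
    rcases this with k | k
    · exact Or.inl (Fin.ext k)
    · exact Or.inr k
  have main : ∀ t, tblOf ψ = t → (∀ a b : Fin 13, opT t a b < 13) → IsSquag (opF t) →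
      SquagIso m (opF t) := by
    intro t ht hb13 ht'
    have step : ∀ a b c (ha : a < 13) (hb : b < 13) (hc : c < 13), (a, b, c) ∈ bl →
        opF t (f ⟨a, ha⟩) (f ⟨b, hb⟩) = f ⟨c, hc⟩ := by
      intro a b c ha hb hc hbl
      have e := Nat.eq_of_beq_eq_true (h1 _ hbl)
      rw [ht] at e
      apply Fin.ext
      change opT t (nib ψ a) (nib ψ b) % 13 = nib ψ c
      rw [e, Nat.mod_eq_of_lt (hlt c hc)]
    have stepK : ∀ a b c (ha : a < 13) (hb : b < 13) (hc : c < 13), Known bl a b c →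
        opF t (f ⟨a, ha⟩) (f ⟨b, hb⟩) = f ⟨c, hc⟩ := by
      intro a b c ha hb hc hk
      rcases hk with e | e | e | e | e | e
      · exact step _ _ _ ha hb hc e
      · exact ht'.swap23 (step _ _ _ ha hc hb e)
      · exact ht'.swap12 (step _ _ _ hb ha hc e)
      · exact ht'.swap12 (ht'.swap23 (step _ _ _ hb hc ha e))
      · exact ht'.swap23 (ht'.swap12 (step _ _ _ hc ha hb e))
      · exact ht'.swap12 (ht'.swap23 (ht'.swap12 (step _ _ _ hc hb ha e)))
    have hom : ∀ a b : Fin 13, f (g.symm (m (g a) (g b))) = opF t (f a) (f b) := by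
      intro a b
      rcases hcov a b with rfl | ⟨c, hk⟩
      · rw [hm.idem, ht'.idem]; simp
      · have hc := (h.known_lt hk).2.2
        have e : m (g a) (g b) = g ⟨c, hc⟩ := h.known_mul hm hk
        rw [e, Equiv.symm_apply_apply]
        exact (stepK a b c a.2 b.2 hc hk).symm
    refine ⟨g.symm.trans f, fun x y => ?_⟩
    have := hom (g.symm x) (g.symm y)
    simpa using this
  rcases Bool.eq_false_or_eq_true (Nat.ble (Nat.pow 2 52) ψ) with k | k
  · exact Or.inr (main tblC (by rw [tblOf, k]; rfl) opT_lt_C isSquag_C)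
  · exact Or.inl (main tblN (by rw [tblOf, k]; rfl) opT_lt_N isSquag_N)

/-- Soundness of the search: a successful run classifies all systems compatible with the state
it is started from. -/
theorem search_sound {α : Type u} [Fintype α] {m : α → α → α} (hm : IsSquag m)
    (hcard : Fintype.card α = 13) (n : ℕ) :
    ∀ (k M : ℕ) (bl : List (ℕ × ℕ × ℕ)) (cs : List ℕ) (pt : ℕ → α),
      SearchInv m k M bl pt → search n k M bl cs = true →
      SquagIso m (opF tblN) ∨ SquagIso m (opF tblC) := by
  induction n with
  | zero =>
    intro k M bl cs pt _ hs
    exact absurd (show false = true from hs) (by simp)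
  | succ n ih =>
    intro k M bl cs pt h hs
    have blt : ∀ {a b : ℕ}, Nat.blt a b = true ↔ a < b := by
      intro a b
      simp [Nat.blt]
    have hs' : selRow k M k 99 0 0
      (fun a b => Nat.blt a k && Nat.blt b k && !cov M a b &&
        allBelow (bif Nat.blt k 13 then Nat.succ k else 13) fun c => cov M a c || cov M b c ||
          forceNat (addBlock M a b c) fun M' =>
          forceNat (bif Nat.blt c k then k else Nat.succ k) fun k' =>
          filt a b c k cs fun cs' => search n k' M' ((a, b, c) :: bl) cs')
      (fun _ => bif Nat.blt k 13 then search n (Nat.succ k) M bl cs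
        else Nat.beq M (Nat.pred (Nat.pow 2 169)) && cs.any (leafOK bl)) = true := hs
    have hle := h.le
    -- fewer than 13 names leave a point unnamed
    have fresh : k < 13 → ∃ x, ∀ i < k, pt i ≠ x := by
      intro hk
      by_contra hcon
      push Not at hcon
      have hsurj : Function.Surjective fun i : Fin k => pt i := by
        intro x
        obtain ⟨i, hi, e⟩ := hcon x
        exact ⟨⟨i, hi⟩, e⟩
      have := Fintype.card_le_of_surjective _ hsurj
      simp [hcard] at this
      omega
    have full : k = 13 → ∀ x, ∃ i < k, pt i = x := by
      rintro rfl x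
      have hpt : Function.Bijective fun a : Fin 13 => pt a := by
        rw [Fintype.bijective_iff_injective_and_card]
        exact ⟨fun a b e => Fin.ext (h.inj a a.2 b b.2 e), by simp [hcard]⟩
      obtain ⟨i, hi⟩ := hpt.2 x
      exact ⟨i, i.2, hi⟩
    rcases selRow_spec _ _ _ _ _ _ _ _ hs' with ⟨a, b, hab⟩ | hE
    · simp only [Bool.and_eq_true, blt, Bool.not_eq_true', forceNat_eq] at hab
      obtain ⟨⟨⟨ha, hb⟩, hc⟩, hall⟩ := hab
      have hall := allBelow_spec hall
      have hba : cov M b a = false := by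
        rw [← Bool.not_eq_true, h.cov b (by omega) a (by omega)]
        rw [← Bool.not_eq_true, h.cov a (by omega) b (by omega)] at hc
        rintro (rfl | ⟨d, hd⟩)
        · exact hc (Or.inl rfl)
        · exact hc (Or.inr ⟨d, hd.swap12⟩)
      by_cases hn : ∃ c < k, pt c = m (pt a) (pt b)
      · obtain ⟨c, hck, e⟩ := hn
        have hc1 := h.cov_third hm ha hb hck hc e.symm
        have hc2 := h.cov_third hm hb ha hck hba (hm.swap12 e.symm)
        have := hall c (by
          cases hk13 : Nat.blt k 13
          · change c < 13; omega
          · change c < k + 1; omega)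
        rw [hc1, hc2, blt.2 hck] at this
        obtain ⟨cs', h'⟩ := filt_spec _ _ _ _ _ _ this
        exact ih _ _ _ _ _ (h.record ha hb hck e.symm) h'
      · push Not at hn
        have hk : k < 13 := by
          by_contra hk
          obtain ⟨i, hi, e⟩ := full (by omega) (m (pt a) (pt b))
          exact hn i hi e
        have unmarked : ∀ x < k, cov M x k = false := by
          intro x hx
          rw [← Bool.not_eq_true, h.cov x (by omega) k hk]
          rintro (rfl | ⟨d, hd⟩)
          · exact absurd hx (lt_irrefl _)
          · exact absurd (h.known_lt hd).2.1 (lt_irrefl _)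
        have := hall k (by rw [blt.2 hk]; exact Nat.lt_succ_self k)
        have hkk : Nat.blt k k = false := by
          rw [← Bool.not_eq_true, blt]; exact lt_irrefl _
        rw [unmarked a ha, unmarked b hb, hkk] at this
        obtain ⟨cs', h'⟩ := filt_spec _ _ _ _ _ _ this
        have h1 := h.extend hk hn
        refine ih _ _ _ _ _ (h1.record (by omega) (by omega) (Nat.lt_succ_self k) ?_) h'
        rw [Function.update_of_ne (by omega), Function.update_of_ne (by omega),
          Function.update_self]
    · rcases Nat.lt_or_ge k 13 with hk | hk
      · rw [blt.2 hk] at hE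
        obtain ⟨x, hx⟩ := fresh hk
        exact ih _ _ _ _ _ (h.extend hk hx) hE
      · obtain rfl : k = 13 := by omega
        have hE' : (Nat.beq M (Nat.pred (Nat.pow 2 169)) && cs.any (leafOK bl)) = true := hE
        rw [Bool.and_eq_true, List.any_eq_true] at hE'
        obtain ⟨hM, ψ, -, hψ⟩ := hE'
        exact h.leaf hm hcard (Nat.eq_of_beq_eq_true hM) hψ

/-- Up to isomorphism there are only two Steiner triple systems of order 13. -/
theorem classification13 {α : Type u} [Fintype α] {m : α → α → α} (hm : IsSquag m)
    (hcard : Fintype.card α = 13) : SquagIso m (opF tblN) ∨ SquagIso m (opF tblC) := by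
  obtain ⟨x⟩ : Nonempty α := Fintype.card_pos_iff.1 (by omega)
  have hd : ∀ a b : Fin 13, cov diagMask a b = true ↔ a = b := by decide +kernel
  refine search_sound hm hcard 45 0 diagMask [] cands (fun _ => x) ⟨by omega, ?_, ?_, ?_, ?_⟩
    search_true
  · intro i hi; omega
  · intro a b c hc; simp at hc
  · intro a b c hc; simp at hc
  · intro a ha b hb
    rw [hd ⟨a, ha⟩ ⟨b, hb⟩]
    simp [Known]

/-! ### The non-cyclic system of order 13 -/

/-- The operation of the non-cyclic system. -/
abbrev opN : Fin 13 → Fin 13 → Fin 13 := opF tblN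

/-- The automorphism group of the non-cyclic system is dihedral of order 6; this is its action
on points. The table stores the images of the points under `r 0, r 1, r 2, sr 0, sr 1, sr 2`
as hexadecimal digits. -/
def rho (g : DihedralGroup 3) (p : Fin 13) : Fin 13 :=
  Fin.ofNat 13 (opT 6635966185194620632773134664327893179521833923461497446169168356205139576464572679630433301008
    (match g with
      | .r i => i.val
      | .sr i => 3 + i.val) p)

/-- The 26 triples of the non-cyclic system, in two lists of 13. The lists are chosen such that
each is invariant under the automorphisms, which permute the indices of either list in the same
way as the points (`idx_rho`), and such that the incidence matrix of the list labelled `false` is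
invertible over `ZMod 2` (`delta_injective`). -/
def block : Bool × Fin 13 → Fin 13 × Fin 13 × Fin 13
  | (false, i) => ![(0, 7, 9), (1, 8, 10), (2, 6, 11), (3, 8, 9), (4, 6, 10), (5, 7, 11),
      (0, 3, 12), (1, 4, 12), (2, 5, 12), (6, 9, 12), (7, 10, 12), (8, 11, 12), (6, 7, 8)] i
  | (true, i) => ![(0, 2, 8), (0, 1, 6), (1, 2, 7), (3, 4, 7), (4, 5, 8), (3, 5, 6),
      (2, 4, 9), (0, 5, 10), (1, 3, 11), (1, 5, 9), (2, 3, 10), (0, 4, 11), (9, 10, 11)] i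

/-- The label of the triple through two distinct points. It is stored as the digit of weight
`32 ^ (13 p + q)`, increased by 16 for the list labelled `true`. -/
def idx (p q : Fin 13) : Bool × Fin 13 :=
  let d := (2593913636855055432091918559167690768799019882117829146529849657686652390231371165727986764620335860590355468777198383887166409616637378299793683538633175749040335623453302574507226252596744003371784113288390882031641593942265608932761496378361123127840
    >>> (5 * (13 * p.val + q.val))) % 32
  (Nat.ble 16 d, Fin.ofNat 13 (d % 16))

theorem idx_comm : ∀ p q, idx p q = idx q p := by decide +kernel

theorem idx_mul : ∀ p q, p ≠ q → idx p (opN p q) = idx p q := by decide +kernel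

theorem idx_block : ∀ b, idx (block b).1 (block b).2.1 = b ∧ (block b).1 ≠ (block b).2.1 ∧
    opN (block b).1 (block b).2.1 = (block b).2.2 := by decide +kernel

theorem block_idx : ∀ p q, p ≠ q →
    (p, q, opN p q) = block (idx p q) ∨ (p, opN p q, q) = block (idx p q) ∨
    (q, p, opN p q) = block (idx p q) ∨ (q, opN p q, p) = block (idx p q) ∨
    (opN p q, p, q) = block (idx p q) ∨ (opN p q, q, p) = block (idx p q) := by decide +kernel

theorem rho_one : ∀ p, rho 1 p = p := by decide +kernel

theorem rho_mul : ∀ g h p, rho (g * h) p = rho g (rho h p) := by decide +kernel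

theorem rho_hom : ∀ g p q, rho g (opN p q) = opN (rho g p) (rho g q) := by decide +kernel

theorem idx_rho : ∀ g p q, p ≠ q →
    idx (rho g p) (rho g q) = ((idx p q).1, rho g (idx p q).2) := by decide +kernel

theorem rho_inv (g : DihedralGroup 3) (p : Fin 13) : rho g⁻¹ (rho g p) = p := by
  rw [← rho_mul, inv_mul_cancel, rho_one]

theorem rho_inv' (g : DihedralGroup 3) (p : Fin 13) : rho g (rho g⁻¹ p) = p := by
  rw [← rho_mul, mul_inv_cancel, rho_one]

/-- The points `0, 1, 3` generate the system: starting with their images `a, b, c` under a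
homomorphism, this computes the remaining images and tests the products `2 · 4 = 9` and
`2 · 5 = 12`. -/
noncomputable def autTest (a b c : ℕ) : Bool :=
  forceNat (opT tblN a b) fun x6 => forceNat (opT tblN a c) fun x12 =>
  forceNat (opT tblN b c) fun x11 => forceNat (opT tblN a x11) fun x4 =>
  forceNat (opT tblN c x6) fun x5 => forceNat (opT tblN a x5) fun x10 =>
  forceNat (opT tblN b x5) fun x9 => forceNat (opT tblN b x10) fun x8 =>
  forceNat (opT tblN a x8) fun x2 =>
  Nat.beq (opT tblN x2 x4) x9 && Nat.beq (opT tblN x2 x5) x12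

theorem autTest_spec : ∀ a b c : Fin 13, a = b ∨ autTest a b c = false ∨
    ∃ g, rho g 0 = a ∧ rho g 1 = b ∧ rho g 3 = c := by decide +kernel

theorem aut_eq_rho {σ : Fin 13 → Fin 13} (hinj : Function.Injective σ)
    (hσ : ∀ p q, σ (opN p q) = opN (σ p) (σ q)) : ∃ g, ∀ p, σ p = rho g p := by
  have step : ∀ p q r : Fin 13, opN p q = r → opT tblN (σ p) (σ q) = σ r := by
    rintro p q r rfl
    rw [hσ]
    exact (Nat.mod_eq_of_lt (opT_lt_N _ _)).symm
  rcases autTest_spec (σ 0) (σ 1) (σ 3) with h | h | ⟨g, h0, h1, h3⟩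
  · exact absurd (hinj h) (by decide)
  · simp only [autTest, forceNat_eq] at h
    rw [step 0 1 6 (by decide +kernel), step 0 3 12 (by decide +kernel),
      step 1 3 11 (by decide +kernel), step 0 11 4 (by decide +kernel),
      step 3 6 5 (by decide +kernel), step 0 5 10 (by decide +kernel),
      step 1 5 9 (by decide +kernel), step 1 10 8 (by decide +kernel),
      step 0 8 2 (by decide +kernel), step 2 4 9 (by decide +kernel),
      step 2 5 12 (by decide +kernel)] at h
    simp at h
  · refine ⟨g, ?_⟩
    have ext : ∀ p q r, opN p q = r → σ p = rho g p → σ q = rho g q → σ r = rho g r := by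
      rintro p q r rfl hp hq
      rw [hσ, rho_hom, hp, hq]
    have h6 := ext 0 1 6 (by decide +kernel) h0.symm h1.symm
    have h12 := ext 0 3 12 (by decide +kernel) h0.symm h3.symm
    have h11 := ext 1 3 11 (by decide +kernel) h1.symm h3.symm
    have h4 := ext 0 11 4 (by decide +kernel) h0.symm h11
    have h5 := ext 3 6 5 (by decide +kernel) h3.symm h6
    have h10 := ext 0 5 10 (by decide +kernel) h0.symm h5
    have h9 := ext 1 5 9 (by decide +kernel) h1.symm h5
    have h7 := ext 0 9 7 (by decide +kernel) h0.symm h9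
    have h8 := ext 1 10 8 (by decide +kernel) h1.symm h10
    have h2 := ext 0 8 2 (by decide +kernel) h0.symm h8
    intro p
    fin_cases p
    exacts [h0.symm, h1.symm, h2, h3.symm, h4, h5, h6, h7, h8, h9, h10, h11, h12]

theorem no_order_thirteen_N (σ : Equiv.Perm (Fin 13))
    (hσ : ∀ p q, σ (opN p q) = opN (σ p) (σ q)) : orderOf σ ≠ 13 := by
  obtain ⟨g, hg⟩ := aut_eq_rho σ.injective hσ
  have hpow : ∀ n p, (σ ^ n) p = rho (g ^ n) p := by
    intro n
    induction n with
    | zero => intro p; rw [pow_zero, pow_zero, rho_one]; rfl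
    | succ n ih => intro p; rw [pow_succ, pow_succ, rho_mul, Equiv.Perm.mul_apply, ih, hg]
  have h6 : ∀ g : DihedralGroup 3, g ^ 6 = 1 := by decide +kernel
  have : σ ^ 6 = 1 := by
    ext p
    rw [hpow, h6, rho_one]
    rfl
  intro h
  have := orderOf_dvd_of_pow_eq_one this
  rw [h] at this
  omega

theorem not_veblen_N : ∀ p, ∃ a c, a ≠ p ∧ c ≠ p ∧ a ≠ c ∧ c ≠ opN p a ∧
    opN (opN p a) (opN p c) ≠ opN a c := by decide +kernel

/-- The cyclic system has an automorphism of order 13. -/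
theorem exists_order_thirteen_C : ∃ σ : Equiv.Perm (Fin 13),
    (∀ p q, σ (opF tblC p q) = opF tblC (σ p) (σ q)) ∧ orderOf σ = 13 := by
  refine ⟨Equiv.addRight 1, by decide +kernel, ?_⟩
  have : Fact (Nat.Prime 13) := ⟨by norm_num⟩
  exact orderOf_eq_prime (by decide +kernel) (by decide +kernel)

/-- Automorphisms of order 13 can be transported along isomorphisms. -/
theorem order_thirteen_transport {α : Type u} {β : Type v} {m : α → α → α} {m' : β → β → β}
    (h : SquagIso m m') (h' : ∃ σ : Equiv.Perm β,
      (∀ p q, σ (m' p q) = m' (σ p) (σ q)) ∧ orderOf σ = 13) :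
    ∃ σ : Equiv.Perm α, (∀ p q, σ (m p q) = m (σ p) (σ q)) ∧ orderOf σ = 13 := by
  obtain ⟨e, he⟩ := h
  obtain ⟨σ, hσ, ho⟩ := h'
  refine ⟨e.symm.permCongrHom σ, fun p q => ?_, ?_⟩
  · apply e.injective
    simp [Equiv.permCongrHom, Equiv.permCongr_apply, he, hσ]
  · rw [← ho]
    exact orderOf_injective e.symm.permCongrHom.toMonoidHom e.symm.permCongrHom.injective σ

/-! ### Coboundaries -/

/-- The sum of `g` over the triple with label `b`. -/
def delta (g : Fin 13 → ZMod 2) (b : Bool × Fin 13) : ZMod 2 :=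
  g (block b).1 + g (block b).2.1 + g (block b).2.2

theorem delta_idx (g : Fin 13 → ZMod 2) {p q : Fin 13} (h : p ≠ q) :
    delta g (idx p q) = g p + g q + g (opN p q) := by
  unfold delta
  rcases block_idx p q h with e | e | e | e | e | e <;> rw [← e] <;> dsimp only <;> ring

theorem delta_injective {g : Fin 13 → ZMod 2} (h : ∀ i, delta g (false, i) = 0) : g = 0 := by
  have h0 : g 0 + g 7 + g 9 = 0 := h 0
  have h1 : g 1 + g 8 + g 10 = 0 := h 1
  have h2 : g 2 + g 6 + g 11 = 0 := h 2
  have h3 : g 3 + g 8 + g 9 = 0 := h 3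
  have h4 : g 4 + g 6 + g 10 = 0 := h 4
  have h5 : g 5 + g 7 + g 11 = 0 := h 5
  have h6 : g 0 + g 3 + g 12 = 0 := h 6
  have h7 : g 1 + g 4 + g 12 = 0 := h 7
  have h8 : g 2 + g 5 + g 12 = 0 := h 8
  have h9 : g 6 + g 9 + g 12 = 0 := h 9
  have h10 : g 7 + g 10 + g 12 = 0 := h 10
  have h11 : g 8 + g 11 + g 12 = 0 := h 11
  have h12 : g 6 + g 7 + g 8 = 0 := h 12
  have two : (2 : ZMod 2) = 0 := by decide
  clear h
  funext p
  fin_cases p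
  · show g 0 = 0
    linear_combination h0 + h2 + h5 + h8 + h9
      - (g 2 + g 5 + g 6 + g 7 + g 9 + g 11 + g 12) * two
  · show g 1 = 0
    linear_combination h0 + h1 + h3 + h6 + h10
      - (g 0 + g 3 + g 7 + g 8 + g 9 + g 10 + g 12) * two
  · show g 2 = 0
    linear_combination h1 + h2 + h4 + h7 + h11
      - (g 1 + g 4 + g 6 + g 8 + g 10 + g 11 + g 12) * two
  · show g 3 = 0
    linear_combination h1 + h3 + h4 + h7 + h9
      - (g 1 + g 4 + g 6 + g 8 + g 9 + g 10 + g 12) * two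
  · show g 4 = 0
    linear_combination h2 + h4 + h5 + h8 + h10
      - (g 2 + g 5 + g 6 + g 7 + g 10 + g 11 + g 12) * two
  · show g 5 = 0
    linear_combination h0 + h3 + h5 + h6 + h11
      - (g 0 + g 3 + g 7 + g 8 + g 9 + g 11 + g 12) * two
  · show g 6 = 0
    linear_combination h1 + h2 + h4 + h5 + h7 + h8 + h12
      - (g 1 + g 2 + g 4 + g 5 + g 6 + g 7 + g 8 + g 10 + g 11 + g 12) * two
  · show g 7 = 0
    linear_combination h0 + h2 + h3 + h5 + h6 + h8 + h12
      - (g 0 + g 2 + g 3 + g 5 + g 6 + g 7 + g 8 + g 9 + g 11 + g 12) * two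
  · show g 8 = 0
    linear_combination h0 + h1 + h3 + h4 + h6 + h7 + h12
      - (g 0 + g 1 + g 3 + g 4 + g 6 + g 7 + g 8 + g 9 + g 10 + g 12) * two
  · show g 9 = 0
    linear_combination h0 + h3 + h6 + h9 + h12
      - (g 0 + g 3 + g 6 + g 7 + g 8 + g 9 + g 12) * two
  · show g 10 = 0
    linear_combination h1 + h4 + h7 + h10 + h12
      - (g 1 + g 4 + g 6 + g 7 + g 8 + g 10 + g 12) * two
  · show g 11 = 0
    linear_combination h2 + h5 + h8 + h11 + h12
      - (g 2 + g 5 + g 6 + g 7 + g 8 + g 11 + g 12) * two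
  · show g 12 = 0
    linear_combination h0 + h1 + h2 + h3 + h4 + h5 + h6 + h7 + h8
      - (g 0 + g 1 + g 2 + g 3 + g 4 + g 5 + g 6 + g 7 + g 8 + g 9 + g 10 + g 11 + g 12) * two

theorem delta_add (g g' : Fin 13 → ZMod 2) (b : Bool × Fin 13) :
    delta (g + g') b = delta g b + delta g' b := by
  simp only [delta, Pi.add_apply]; ring

theorem delta_surjective (f : Fin 13 → ZMod 2) : ∃ g, ∀ i, delta g (false, i) = f i := by
  let D : (Fin 13 → ZMod 2) →+ (Fin 13 → ZMod 2) :=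
    AddMonoidHom.mk' (fun g i => delta g (false, i)) fun g g' => by
      funext i; exact delta_add g g' _
  have hD : Function.Injective D := by
    rw [injective_iff_map_eq_zero]
    intro g hg
    exact delta_injective fun i => congrFun hg i
  obtain ⟨g, hg⟩ := Finite.surjective_of_injective hD f
  exact ⟨g, fun i => congrFun hg i⟩

/-! ### The quotient at a Veblen point -/

/-- Veblen points in terms of the quasigroup. -/
def IsVeb {α : Type u} (m : α → α → α) (x : α) : Prop :=
  ∀ a c, a ≠ x → c ≠ x → a ≠ c → c ≠ m x a → m (m x a) (m x c) = m a c

theorem IsVeb.iso {α : Type u} {β : Type v} {m : α → α → α} {m' : β → β → β} (e : α ≃ β)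
    (he : ∀ a b, e (m a b) = m' (e a) (e b)) {x : α} (hx : IsVeb m x) : IsVeb m' (e x) := by
  intro a c ha hc hac hcx
  obtain ⟨a, rfl⟩ := e.surjective a
  obtain ⟨c, rfl⟩ := e.surjective c
  simp only [← he, e.injective.eq_iff, ne_eq] at *
  exact hx a c ha hc hac hcx

section Quotient

variable {α : Type u} {m : α → α → α} {x : α}

/-- The power `i` of the involution `a ↦ m x a`. -/
def act (m : α → α → α) (x : α) (i : ZMod 2) (a : α) : α := if i = 0 then a else m x a

theorem zmod_two (i : ZMod 2) : i = 0 ∨ i = 1 := by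
  revert i; decide

theorem act_zero (a : α) : act m x 0 a = a := if_pos rfl

theorem act_one (a : α) : act m x 1 a = m x a := if_neg (by decide)

theorem act_act (hm : IsSquag m) (i j : ZMod 2) (a : α) :
    act m x i (act m x j a) = act m x (i + j) a := by
  have h2 : (1 : ZMod 2) + 1 = 0 := by decide
  rcases zmod_two i with rfl | rfl <;> rcases zmod_two j with rfl | rfl <;>
    simp only [act_zero, act_one, add_zero, zero_add, h2, hm.inv]

theorem mul_ne_self (hm : IsSquag m) {a : α} (ha : a ≠ x) : m x a ≠ a ∧ m x a ≠ x :=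
  ⟨fun h => ha (hm.eq_right h).symm, fun h => ha (hm.eq_left h).symm⟩

theorem act_ne (hm : IsSquag m) {a : α} (ha : a ≠ x) (i : ZMod 2) : act m x i a ≠ x := by
  rcases zmod_two i with rfl | rfl
  · rwa [act_zero]
  · rw [act_one]; exact (mul_ne_self hm ha).2

theorem act_inj (hm : IsSquag m) {a : α} (ha : a ≠ x) {i j : ZMod 2}
    (h : act m x i a = act m x j a) : i = j := by
  rcases zmod_two i with rfl | rfl <;> rcases zmod_two j with rfl | rfl <;>
    simp only [act_zero, act_one] at h ⊢
  · exact absurd h.symm (mul_ne_self hm ha).1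
  · exact absurd h (mul_ne_self hm ha).1

theorem mul_ne (hm : IsSquag m) {a c : α} (hcx : c ≠ m x a) : m a c ≠ x :=
  fun h => hcx (hm.swap12 (hm.swap23 h)).symm

theorem IsVeb.mul_right (hm : IsSquag m) (hx : IsVeb m x) {a c : α} (ha : a ≠ x) (hc : c ≠ x)
    (hac : a ≠ c) (hcx : c ≠ m x a) : m a (m x c) = m x (m a c) := by
  have h := hx (m a c) c (mul_ne hm hcx) hc (fun h => hac (hm.eq_right h)) (fun h => by
    have : m x c = m a c := by conv_lhs => rw [h, hm.inv]
    rw [hm.comm x, hm.comm a] at this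
    exact ha (hm.cancel this).symm)
  rw [hm.inv'] at h
  exact hm.swap12 (hm.swap23 (hm.swap12 h))

/-- At a Veblen point the involution can be moved out of products. -/
theorem IsVeb.mul_act (hm : IsSquag m) (hx : IsVeb m x) {a c : α} (ha : a ≠ x) (hc : c ≠ x)
    (hac : c ≠ a) (hcx : c ≠ m x a) (i j : ZMod 2) :
    m (act m x i a) (act m x j c) = act m x (i + j) (m a c) := by
  have h2 : (1 : ZMod 2) + 1 = 0 := by decide
  have hax : a ≠ m x c := fun h => hcx (hm.swap23 h.symm).symm
  rcases zmod_two i with rfl | rfl <;> rcases zmod_two j with rfl | rfl <;>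
    simp only [act_zero, act_one, add_zero, zero_add, h2]
  · exact hx.mul_right hm ha hc hac.symm hcx
  · rw [hm.comm, hm.comm a c]; exact hx.mul_right hm hc ha hac hax
  · exact hx a c ha hc hac.symm hcx

variable [DecidableEq α]

/-- The triple through `x` and `a`, as a point of the quotient. -/
def qline (m : α → α → α) {x a : α} (ha : a ≠ x) : QuotPts (triples m) x :=
  ⟨{x, a, m x a}, ⟨x, a, ha.symm, rfl⟩, by simp⟩

theorem mem_qline {a d : α} (ha : a ≠ x) :
    d ∈ (qline m ha).1 ↔ d = x ∨ d = a ∨ d = m x a := by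
  simp [qline]

theorem qline_eq (hm : IsSquag m) {a c : α} (ha : a ≠ x) (hc : c ≠ x) :
    qline m ha = qline m hc ↔ c = a ∨ c = m x a := by
  constructor
  · intro h
    have : c ∈ (qline m ha).1 := by rw [h, mem_qline]; simp
    rw [mem_qline] at this
    exact this.resolve_left hc
  · rintro (rfl | rfl)
    · rfl
    · apply Subtype.ext
      simp only [qline, hm.inv]
      rw [Finset.pair_comm]

theorem qline_surj (hm : IsSquag m) (t : QuotPts (triples m) x) :
    ∃ a, ∃ ha : a ≠ x, qline m ha = t := by
  obtain ⟨t, ⟨p, q, hpq, rfl⟩, hx⟩ := t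
  simp only [Finset.mem_insert, Finset.mem_singleton] at hx
  rcases hx with rfl | rfl | rfl
  · exact ⟨q, hpq.symm, rfl⟩
  · refine ⟨p, hpq, Subtype.ext ?_⟩
    simp only [qline, hm.comm x p]
    rw [Finset.insert_comm]
  · have h : p ≠ m p q := fun h => hpq (hm.eq_left h.symm)
    refine ⟨p, h, Subtype.ext ?_⟩
    simp only [qline, hm.swap12 (hm.swap23 (rfl : m p q = _))]
    ext z
    simp only [Finset.mem_insert, Finset.mem_singleton]
    tauto

theorem qline_of_mem (hm : IsSquag m) {t : QuotPts (triples m) x} {a : α} (h : a ∈ t.1)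
    (ha : a ≠ x) : qline m ha = t := by
  obtain ⟨c, hc, rfl⟩ := qline_surj hm t
  rw [mem_qline] at h
  exact ((qline_eq hm hc ha).2 (h.resolve_left ha)).symm

/-- The quotient at a Veblen point is a Steiner triple system, for which `a ↦ qline a` is
multiplicative. -/
theorem exists_quotient (hm : IsSquag m) (hx : IsVeb m x) :
    ∃ mQ : QuotPts (triples m) x → QuotPts (triples m) x → QuotPts (triples m) x,
      IsSquag mQ ∧ QuotTriples (triples m) x = triples mQ ∧
      ∀ (a c : α) (ha : a ≠ x) (hc : c ≠ x) (_ : c ≠ a) (hcx : c ≠ m x a),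
        mQ (qline m ha) (qline m hc) = qline m (mul_ne hm hcx) := by
  choose s hs hsq using fun t : QuotPts (triples m) x => qline_surj hm t
  have hne : ∀ t u, t ≠ u → s u ≠ s t ∧ s u ≠ m x (s t) := by
    intro t u htu
    have : ¬ (s u = s t ∨ s u = m x (s t)) := by
      rw [← qline_eq hm (hs t) (hs u), hsq, hsq]; exact htu
    tauto
  let mQ : QuotPts (triples m) x → QuotPts (triples m) x → QuotPts (triples m) x :=
    fun t u => if h : t = u then t else qline m (mul_ne hm (hne t u h).2)
  have key : ∀ (a c : α) (ha : a ≠ x) (hc : c ≠ x) (_ : c ≠ a) (hcx : c ≠ m x a),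
      mQ (qline m ha) (qline m hc) = qline m (mul_ne hm hcx) := by
    intro a c ha hc hac hcx
    have htu : qline m ha ≠ qline m hc := by
      rw [Ne, qline_eq hm]; tauto
    simp only [mQ, dif_neg htu]
    rw [qline_eq hm]
    have h1 : ∃ i, s (qline m ha) = act m x i a := by
      rcases (qline_eq hm ha (hs (qline m ha))).1 (hsq _).symm with h | h
      · exact ⟨0, by rw [act_zero, h]⟩
      · exact ⟨1, by rw [act_one, ← h]⟩
    have h2 : ∃ i, s (qline m hc) = act m x i c := by
      rcases (qline_eq hm hc (hs (qline m hc))).1 (hsq _).symm with h | h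
      · exact ⟨0, by rw [act_zero, h]⟩
      · exact ⟨1, by rw [act_one, ← h]⟩
    obtain ⟨i, hi⟩ := h1
    obtain ⟨j, hj⟩ := h2
    rw [hi, hj, hx.mul_act hm ha hc hac hcx]
    rcases zmod_two (i + j) with h | h <;> rw [h]
    · left; rw [act_zero]
    · right; rw [act_one, hm.inv]
  have idem : ∀ t, mQ t t = t := fun t => dif_pos rfl
  refine ⟨mQ, ⟨idem, ?_, ?_⟩, ?_, key⟩
  · intro t u
    by_cases htu : t = u
    · rw [htu]
    · obtain ⟨a, ha, rfl⟩ := qline_surj hm t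
      obtain ⟨c, hc, rfl⟩ := qline_surj hm u
      rw [qline_eq hm, not_or] at htu
      rw [key a c ha hc htu.1 htu.2, key c a hc ha (Ne.symm htu.1)
        (fun h => htu.2 (hm.swap23 h.symm).symm)]
      apply Subtype.ext
      simp only [qline, hm.comm a c]
  · intro t u
    by_cases htu : t = u
    · rw [htu, idem, idem]
    · obtain ⟨a, ha, rfl⟩ := qline_surj hm t
      obtain ⟨c, hc, rfl⟩ := qline_surj hm u
      rw [qline_eq hm, not_or] at htu
      rw [key a c ha hc htu.1 htu.2, key a (m a c) ha _
        (fun h => htu.1 (hm.eq_left h).symm) (fun h => by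
          rw [hm.comm x a] at h
          exact hc (hm.cancel h))]
      apply Subtype.ext
      simp only [qline, hm.inv]
  · ext b
    constructor
    · rintro ⟨T1, T2, T3, h12, h13, h23, rfl, a, haT, ha, c, hcT, hc, d, hd, hdT⟩
      obtain rfl := qline_of_mem hm haT ha
      obtain rfl := qline_of_mem hm hcT hc
      obtain rfl := (hm.mem_triples.1 hd).2
      have h12' := h12
      rw [Ne, qline_eq hm, not_or] at h12
      obtain rfl := qline_of_mem hm hdT (mul_ne hm h12.2)
      exact ⟨_, _, h12', by rw [key a c ha hc h12.1 h12.2]⟩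
    · rintro ⟨t, u, htu, rfl⟩
      obtain ⟨a, ha, rfl⟩ := qline_surj hm t
      obtain ⟨c, hc, rfl⟩ := qline_surj hm u
      have h := htu
      rw [Ne, qline_eq hm, not_or] at h
      rw [key a c ha hc h.1 h.2]
      refine ⟨_, _, _, htu, ?_, ?_, rfl, a, ?_, ha, c, ?_, hc, m a c,
        ⟨a, c, Ne.symm h.1, rfl⟩, ?_⟩
      · rw [Ne, qline_eq hm]
        rintro (k | k)
        · exact h.1 (hm.eq_left k).symm
        · rw [hm.comm x] at k; exact hc (hm.cancel k)
      · rw [Ne, qline_eq hm]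
        rintro (k | k)
        · exact h.1 (hm.eq_right k).symm
        · rw [hm.comm x, hm.comm a] at k; exact ha (hm.cancel k)
      all_goals simp [mem_qline]

end Quotient

/-! ### Extensions of the non-cyclic system -/

/-- The extension of the non-cyclic system by a Veblen point `none`, with cocycle `F`: each point
`p` is doubled to `(p, 0)`, `(p, 1)`, and the product of points over distinct `p`, `q` is
twisted by the value of `F` on the triple through `p` and `q`. -/
def extOp (F : Bool × Fin 13 → ZMod 2) :
    Option (Fin 13 × ZMod 2) → Option (Fin 13 × ZMod 2) → Option (Fin 13 × ZMod 2)
  | none, none => none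
  | none, some (p, i) => some (p, i + 1)
  | some (p, i), none => some (p, i + 1)
  | some (p, i), some (q, j) =>
    if p = q then if i = j then some (p, i) else none
    else some (opN p q, i + j + F (idx p q))

section Extension

variable {F F' : Bool × Fin 13 → ZMod 2}

theorem two_eq_zero : (2 : ZMod 2) = 0 := by decide

theorem isSquag_opN : IsSquag opN := isSquag_N

theorem ne_opN {p q : Fin 13} (h : p ≠ q) : p ≠ opN p q ∧ q ≠ opN p q :=
  ⟨fun k => h (isSquag_opN.eq_left k.symm), fun k => h (isSquag_opN.eq_right k.symm)⟩

theorem extOp_none (p : Fin 13) (i : ZMod 2) : extOp F none (some (p, i)) = some (p, i + 1) := rfl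

theorem extOp_same (p : Fin 13) (i j : ZMod 2) :
    extOp F (some (p, i)) (some (p, j)) = if i = j then some (p, i) else none := by
  simp [extOp]

theorem extOp_ne {p q : Fin 13} (h : p ≠ q) (i j : ZMod 2) :
    extOp F (some (p, i)) (some (q, j)) = some (opN p q, i + j + F (idx p q)) := by
  simp [extOp, h]

theorem isSquag_ext (F : Bool × Fin 13 → ZMod 2) : IsSquag (extOp F) := by
  have h11 : ∀ i : ZMod 2, i + 1 + 1 = i := by decide
  have hne : ∀ i j : ZMod 2, i ≠ j → i + 1 = j := by decide
  have hne1 : ∀ i : ZMod 2, i ≠ i + 1 := by decide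
  refine ⟨?_, ?_, ?_⟩
  · rintro (_ | ⟨p, i⟩)
    · rfl
    · rw [extOp_same, if_pos rfl]
  · rintro (_ | ⟨p, i⟩) (_ | ⟨q, j⟩)
    · rfl
    · rfl
    · rfl
    · by_cases h : p = q
      · subst h
        rw [extOp_same, extOp_same]
        by_cases hij : i = j
        · rw [hij]
        · rw [if_neg hij, if_neg (Ne.symm hij)]
      · rw [extOp_ne h, extOp_ne (Ne.symm h), idx_comm q p, isSquag_opN.comm q p, add_comm j i]
  · rintro (_ | ⟨p, i⟩) (_ | ⟨q, j⟩)
    · rfl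
    · rw [extOp_none, extOp_none, h11]
    · change extOp F (some (p, i)) (some (p, i + 1)) = _
      rw [extOp_same, if_neg (hne1 i)]
    · by_cases h : p = q
      · subst h
        rw [extOp_same]
        by_cases hij : i = j
        · rw [if_pos hij, extOp_same, if_pos rfl, hij]
        · rw [if_neg hij]
          change some (p, i + 1) = _
          rw [hne i j hij]
      · rw [extOp_ne h, extOp_ne (ne_opN h).1, isSquag_opN.inv, idx_mul p q h]
        congr 2
        linear_combination (i + F (idx p q)) * two_eq_zero

theorem isVeb_ext_none : IsVeb (extOp F) none := by
  rintro (_ | ⟨p, i⟩) (_ | ⟨q, j⟩) ha hc hac hcx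
  · exact absurd rfl ha
  · exact absurd rfl ha
  · exact absurd rfl hc
  · have h : p ≠ q := by
      rintro rfl
      have : ∀ i j : ZMod 2, i ≠ j → j = i + 1 := by decide
      exact hcx (by rw [extOp_none, this i j (fun k => hac (by rw [k]))])
    rw [extOp_none, extOp_none, extOp_ne h, extOp_ne h]
    congr 2
    linear_combination two_eq_zero

/-- The only Veblen point of an extension is the new one, since the non-cyclic system has no
Veblen points. -/
theorem isVeb_ext_iff {u : Option (Fin 13 × ZMod 2)} : IsVeb (extOp F) u ↔ u = none := by
  constructor
  · intro hu
    rcases u with _ | ⟨p, i⟩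
    · rfl
    · exfalso
      obtain ⟨a, c, ha, hc, hac, hcp, h⟩ := not_veblen_N p
      have key := hu (some (a, 0)) (some (c, 0)) (by simp [ha]) (by simp [hc]) (by simp [hac])
        (by rw [extOp_ne (Ne.symm ha)]; simp [hcp])
      rw [extOp_ne (Ne.symm ha), extOp_ne (Ne.symm hc), extOp_ne hac,
        extOp_ne (fun k => hac (isSquag_opN.cancel k))] at key
      simp only [Option.some.injEq, Prod.mk.injEq] at key
      exact h key.1
  · rintro rfl; exact isVeb_ext_none

/-- The quotient of an extension has no automorphism of order 13. -/
theorem quotient_ext {α : Type u} [DecidableEq α] {m : α → α → α} (hm : IsSquag m)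
    (e : Option (Fin 13 × ZMod 2) ≃ α) (he : ∀ u v, e (extOp F u v) = m (e u) (e v)) :
    ¬ ∃ σ : Equiv.Perm (QuotPts (triples m) (e none)),
      (∀ b : Finset (QuotPts (triples m) (e none)),
        b ∈ QuotTriples (triples m) (e none) ↔
          b.image (σ : QuotPts (triples m) (e none) → QuotPts (triples m) (e none)) ∈
            QuotTriples (triples m) (e none)) ∧ orderOf σ = 13 := by
  obtain ⟨mQ, hQ, hT, hmul⟩ := exists_quotient hm (isVeb_ext_none.iso e he)
  rintro ⟨σ, hσ, ho⟩
  rw [hT, preserves_iff hQ hQ] at hσ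
  have hsome : ∀ y, e (some y) ≠ e none := fun y => by simp
  have heq : ∀ p i q j, qline m (hsome (p, i)) = qline m (hsome (q, j)) ↔ p = q := by
    intro p i q j
    have : ∀ i j : ZMod 2, j = i ∨ j = i + 1 := by decide
    rw [qline_eq hm, ← he, e.injective.eq_iff, e.injective.eq_iff, extOp_none]
    simp only [Option.some.injEq, Prod.mk.injEq]
    have := this i j
    tauto
  have hbij : Function.Bijective fun p : Fin 13 => qline m (hsome (p, 0)) := by
    constructor
    · intro p q h
      exact (heq _ _ _ _).1 h
    · intro t
      obtain ⟨a, ha, rfl⟩ := qline_surj hm t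
      obtain ⟨u, rfl⟩ := e.surjective a
      rcases u with _ | ⟨p, i⟩
      · exact absurd rfl ha
      · exact ⟨p, (heq _ _ _ _).2 rfl⟩
  have hiso : SquagIso opN mQ := by
    refine ⟨Equiv.ofBijective _ hbij, fun p q => ?_⟩
    simp only [Equiv.ofBijective_apply]
    by_cases hpq : p = q
    · subst hpq; simp only [isSquag_opN.idem, hQ.idem]
    · rw [hmul _ _ _ _ (by simp [Ne.symm hpq])
        (by rw [← he, extOp_none]; simp [Ne.symm hpq])]
      simp only [← he, extOp_ne hpq]
      exact (heq _ _ _ _).2 rfl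
  obtain ⟨τ, hτ, hτo⟩ := order_thirteen_transport hiso ⟨σ, hσ, ho⟩
  exact no_order_thirteen_N τ hτ hτo

/-- Conversely, a system of order 27 with a Veblen point at which the quotient has no automorphism
of order 13 is an extension of the non-cyclic system. -/
theorem exists_ext {α : Type u} [Fintype α] [DecidableEq α] {m : α → α → α} (hm : IsSquag m)
    (hcard : Fintype.card α = 27) {x : α} (hx : IsVeb m x)
    (hq : ¬ ∃ σ : Equiv.Perm (QuotPts (triples m) x),
      (∀ b : Finset (QuotPts (triples m) x), b ∈ QuotTriples (triples m) x ↔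
        b.image (σ : QuotPts (triples m) x → QuotPts (triples m) x) ∈
          QuotTriples (triples m) x) ∧ orderOf σ = 13) :
    ∃ F, SquagIso (extOp F) m := by
  classical
  obtain ⟨mQ, hQ, hT, hmul⟩ := exists_quotient hm hx
  choose s hs hsq using fun t : QuotPts (triples m) x => qline_surj hm t
  have hline : ∀ {a c : α} (ha : a ≠ x) (hc : c ≠ x), qline m ha = qline m hc →
      ∃ i, c = act m x i a := by
    intro a c ha hc h
    rcases (qline_eq hm ha hc).1 h with k | k
    · exact ⟨0, by rw [act_zero, k]⟩
    · exact ⟨1, by rw [act_one, k]⟩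
  have hact : ∀ {a : α} (ha : a ≠ x) (i : ZMod 2), qline m (act_ne hm ha i) = qline m ha := by
    intro a ha i
    symm
    rw [qline_eq hm]
    rcases zmod_two i with rfl | rfl
    · left; rw [act_zero]
    · right; rw [act_one]
  have : Fintype (QuotPts (triples m) x) := Fintype.ofFinite _
  let f : Option (QuotPts (triples m) x × ZMod 2) → α
    | none => x
    | some (t, i) => act m x i (s t)
  have hf : Function.Bijective f := by
    constructor
    · rintro (_ | ⟨t, i⟩) (_ | ⟨u, j⟩) h
      · rfl
      · exact absurd h.symm (act_ne hm (hs u) j)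
      · exact absurd h (act_ne hm (hs t) i)
      · have h : act m x i (s t) = act m x j (s u) := h
        have htu : t = u := by
          rw [← hsq t, ← hsq u, ← hact (hs t) i, ← hact (hs u) j]
          simp only [h]
        subst htu
        rw [act_inj hm (hs t) h]
    · intro a
      by_cases ha : a = x
      · exact ⟨none, ha.symm⟩
      · obtain ⟨i, hi⟩ := hline (hs (qline m ha)) ha (hsq _)
        exact ⟨some (_, i), hi.symm⟩
  have hcQ : Fintype.card (QuotPts (triples m) x) = 13 := by
    have := Fintype.card_of_bijective hf
    rw [hcard, Fintype.card_option, Fintype.card_prod, ZMod.card] at this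
    omega
  have hiso : SquagIso mQ opN := by
    rcases classification13 hQ hcQ with h | h
    · exact h
    · exfalso
      apply hq
      obtain ⟨σ, hσ, ho⟩ := order_thirteen_transport h exists_order_thirteen_C
      refine ⟨σ, ?_, ho⟩
      rw [hT, preserves_iff hQ hQ]
      exact hσ
  obtain ⟨e, he⟩ := hiso
  let c : Fin 13 → α := fun p => s (e.symm p)
  have hc : ∀ p, c p ≠ x := fun p => hs _
  have hcq : ∀ p, qline m (hc p) = e.symm p := fun p => hsq _
  have hcne : ∀ {p q}, p ≠ q → c q ≠ c p ∧ c q ≠ m x (c p) := by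
    intro p q hpq
    have : ¬ (c q = c p ∨ c q = m x (c p)) := by
      rw [← qline_eq hm (hc p) (hc q), hcq, hcq]
      simpa using hpq
    tauto
  have hex : ∀ p q, p ≠ q → ∃ k, m (c p) (c q) = act m x k (c (opN p q)) := by
    intro p q hpq
    have h := hcne hpq
    refine hline (hc _) (mul_ne hm h.2) ?_
    rw [← hmul _ _ (hc p) (hc q) h.1 h.2, hcq, hcq, hcq]
    apply e.injective
    rw [he]
    simp
  have hswap12 : ∀ {p q r k}, m (c p) (c q) = act m x k (c r) → m (c q) (c p) = act m x k (c r) :=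
    fun h => hm.swap12 h
  have hswap23 : ∀ {p q r k}, p ≠ r → m (c p) (c q) = act m x k (c r) →
      m (c p) (c r) = act m x k (c q) := by
    intro p q r k hpr h
    have h1 := hm.swap23 h
    have h2 := hcne hpr
    have h3 := hx.mul_act hm (hc p) (hc r) h2.1 h2.2 0 k
    rw [act_zero, zero_add, h1] at h3
    rw [h3, act_act hm, ← two_mul, two_eq_zero, zero_mul, act_zero]
  choose F hF using fun b : Bool × Fin 13 => hex (block b).1 (block b).2.1 (idx_block b).2.1
  have hF' : ∀ p q, p ≠ q → m (c p) (c q) = act m x (F (idx p q)) (c (opN p q)) := by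
    intro p q hpq
    have h := hF (idx p q)
    rw [(idx_block (idx p q)).2.2] at h
    rcases block_idx p q hpq with k | k | k | k | k | k <;> rw [← k] at h
    · exact h
    · exact hswap23 hpq h
    · exact hswap12 h
    · exact hswap12 (hswap23 (Ne.symm hpq) h)
    · exact hswap23 hpq (hswap12 h)
    · exact hswap12 (hswap23 (Ne.symm hpq) (hswap12 h))
  let f' : Option (Fin 13 × ZMod 2) ≃ α :=
    (Equiv.optionCongr (Equiv.prodCongr e.symm (Equiv.refl _))).trans (Equiv.ofBijective f hf)
  have hf'x : f' none = x := rfl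
  have hf' : ∀ p i, f' (some (p, i)) = act m x i (c p) := fun p i => rfl
  refine ⟨F, f', ?_⟩
  have hx1 : ∀ p i, m x (act m x i (c p)) = act m x (i + 1) (c p) := by
    intro p i
    rw [add_comm, ← act_act hm, act_one]
  have hne : ∀ i j : ZMod 2, i ≠ j → j = i + 1 := by decide
  rintro (_ | ⟨p, i⟩) (_ | ⟨q, j⟩)
  · exact (hm.idem x).symm
  · exact (hx1 q j).symm
  · rw [hm.comm]
    exact (hx1 p i).symm
  · by_cases h : p = q
    · subst h
      rw [extOp_same]
      by_cases hij : i = j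
      · rw [if_pos hij, hij, hm.idem]
      · rw [if_neg hij, hf'x, hf', hf', hne i j hij, ← hx1, hm.comm, hm.inv']
    · have h' := hcne h
      rw [extOp_ne h, hf', hf', hf', hx.mul_act hm (hc p) (hc q) h'.1 h'.2, hF' p q h,
        act_act hm]

/-! ### Isomorphism of extensions -/

/-- Extensions are isomorphic iff their cocycles agree up to an automorphism and a coboundary. -/
theorem ext_iso_iff : SquagIso (extOp F) (extOp F') ↔
    ∃ (g : DihedralGroup 3) (γ : Fin 13 → ZMod 2),
      ∀ b, F' (b.1, rho g b.2) = F b + delta γ b := by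
  constructor
  · rintro ⟨e, he⟩
    have hnone : e none = none := isVeb_ext_iff.1 (isVeb_ext_none.iso e he)
    have hex : ∀ p, ∃ y, e (some (p, 0)) = some y := by
      intro p
      rw [← Option.ne_none_iff_exists', ← hnone]
      simp
    choose y hy using hex
    have hy' : ∀ p i, e (some (p, i)) = some ((y p).1, (y p).2 + i) := by
      intro p i
      rcases zmod_two i with rfl | rfl
      · rw [hy, add_zero]
      · have := he none (some (p, 0))
        rw [extOp_none, hnone, hy, zero_add] at this
        rw [this]
        rfl
    have hinj : Function.Injective fun p => (y p).1 := by
      intro p q h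
      have h : (y p).1 = (y q).1 := h
      have := hy' p ((y q).2 - (y p).2)
      rw [h, add_sub_cancel] at this
      rw [show some ((y q).1, (y q).2) = e (some (q, 0)) from (hy q).symm,
        e.injective.eq_iff] at this
      simp only [Option.some.injEq, Prod.mk.injEq] at this
      exact this.1
    have hmul : ∀ p q, p ≠ q → (y (opN p q)).1 = opN (y p).1 (y q).1 ∧
        (y (opN p q)).2 + F (idx p q) = (y p).2 + (y q).2 + F' (idx (y p).1 (y q).1) := by
      intro p q hpq
      have := he (some (p, 0)) (some (q, 0))
      rw [extOp_ne hpq, hy', hy', hy', extOp_ne (fun k => hpq (hinj k))] at this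
      simpa using this
    obtain ⟨g, hg⟩ := aut_eq_rho hinj (fun p q => by
      by_cases hpq : p = q
      · subst hpq; simp only [isSquag_opN.idem]
      · exact (hmul p q hpq).1)
    refine ⟨g, fun p => (y p).2, fun b => ?_⟩
    obtain ⟨h1, h2, -⟩ := idx_block b
    have h3 := (hmul _ _ h2).2
    rw [hg, hg, idx_rho g _ _ h2, h1] at h3
    have h4 := delta_idx (fun p => (y p).2) h2
    rw [h1] at h4
    rw [h4]
    linear_combination -h3 - ((y (block b).1).2 + (y (block b).2.1).2) * two_eq_zero
  · rintro ⟨g, γ, h⟩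
    let f : Option (Fin 13 × ZMod 2) → Option (Fin 13 × ZMod 2) :=
      Option.map fun y => (rho g y.1, y.2 + γ y.1)
    have hinj : Function.Injective f := by
      apply Option.map_injective
      rintro ⟨p, i⟩ ⟨q, j⟩ k
      simp only [Prod.mk.injEq] at k
      have hpq : p = q := by rw [← rho_inv g p, k.1, rho_inv]
      subst hpq
      rw [add_right_cancel k.2]
    refine ⟨Equiv.ofBijective f (Finite.injective_iff_bijective.1 hinj), fun u v => ?_⟩
    simp only [Equiv.ofBijective_apply]
    rcases u with _ | ⟨p, i⟩ <;> rcases v with _ | ⟨q, j⟩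
    · rfl
    · change some (_, _) = some (_, _)
      rw [add_right_comm]
    · change some (_, _) = some (_, _)
      rw [add_right_comm]
    · by_cases hpq : p = q
      · subst hpq
        change f _ = extOp F' (some (_, _)) (some (_, _))
        rw [extOp_same, extOp_same]
        by_cases hij : i = j
        · rw [if_pos hij, if_pos (by rw [hij])]; rfl
        · rw [if_neg hij, if_neg (fun k => hij (add_right_cancel k))]; rfl
      · have hr : rho g p ≠ rho g q := fun k => hpq (by rw [← rho_inv g p, k, rho_inv])
        rw [extOp_ne hpq]
        change some (_, _) = extOp F' (some (_, _)) (some (_, _))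
        rw [extOp_ne hr, rho_hom, idx_rho g p q hpq, h, delta_idx γ hpq]
        congr 2
        linear_combination - (γ p + γ q) * two_eq_zero

end Extension

/-- The cocycle with values `w` on the second list of triples and zero on the first. -/
def nf (w : Fin 13 → ZMod 2) (b : Bool × Fin 13) : ZMod 2 := if b.1 then w b.2 else 0

theorem exists_nf (F : Bool × Fin 13 → ZMod 2) : ∃ w, SquagIso (extOp F) (extOp (nf w)) := by
  obtain ⟨γ, hγ⟩ := delta_surjective fun i => F (false, i)
  refine ⟨fun i => F (true, i) + delta γ (true, i), ext_iso_iff.2 ⟨1, γ, ?_⟩⟩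
  rintro ⟨_ | _, i⟩
  · simp only [rho_one, nf, hγ, Bool.false_eq_true, if_false]
    linear_combination - F (false, i) * two_eq_zero
  · simp [rho_one, nf]

theorem nf_iso_iff {w w' : Fin 13 → ZMod 2} :
    SquagIso (extOp (nf w)) (extOp (nf w')) ↔ ∃ g, ∀ i, w' (rho g i) = w i := by
  rw [ext_iso_iff]
  constructor
  · rintro ⟨g, γ, h⟩
    have hγ : γ = 0 := delta_injective fun i => by
      have := h (false, i)
      simp only [nf, Bool.false_eq_true, if_false, zero_add] at this
      exact this.symm
    refine ⟨g, fun i => ?_⟩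
    have := h (true, i)
    simpa [hγ, nf, delta] using this
  · rintro ⟨g, h⟩
    refine ⟨g, 0, ?_⟩
    rintro ⟨_ | _, i⟩
    · simp [nf, delta]
    · simp [nf, delta, h]

/-! ### Counting orbits of normal forms -/

/-- The values of a cocycle in normal form. A separate name is used since the dihedral group is to
act on these functions through their argument. -/
def Weights : Type := Fin 13 → ZMod 2

instance : Fintype Weights := inferInstanceAs (Fintype (Fin 13 → ZMod 2))

instance : DecidableEq Weights := inferInstanceAs (DecidableEq (Fin 13 → ZMod 2))

instance : MulAction (DihedralGroup 3) Weights where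
  smul g w := fun i => w (rho g⁻¹ i)
  one_smul w := funext fun i => show w (rho 1⁻¹ i) = w i by rw [inv_one, rho_one]
  mul_smul g h w := funext fun i =>
    show w (rho (g * h)⁻¹ i) = w (rho h⁻¹ (rho g⁻¹ i)) by rw [mul_inv_rev, rho_mul]

theorem smul_eq_iff {g : DihedralGroup 3} {w w' : Weights} :
    g • w = w' ↔ ∀ i, w' (rho g i) = w i := by
  constructor
  · rintro rfl i
    change w (rho g⁻¹ (rho g i)) = w i
    rw [rho_inv]
  · intro h
    funext i
    change w (rho g⁻¹ i) = w' i
    rw [← h, rho_inv']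

/-- The least element of the cycle of `i` under `rho g`; cycles have length at most 3. -/
def cycleMin (g : DihedralGroup 3) (i : Fin 13) : Fin 13 := min i (min (rho g i) (rho g (rho g i)))

theorem cycleMin_idem : ∀ g i, cycleMin g (cycleMin g i) = cycleMin g i := by decide +kernel

theorem cycleMin_rho : ∀ g i, cycleMin g (rho g i) = cycleMin g i := by decide +kernel

/-- Fixed functions are determined by arbitrary values on the least elements of the cycles. -/
theorem card_fixedBy (g : DihedralGroup 3) :
    Fintype.card (MulAction.fixedBy Weights g) =
      2 ^ Fintype.card {i // cycleMin g i = i} := by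
  have key : ∀ w : Weights, w ∈ MulAction.fixedBy Weights g ↔ ∀ i, w (rho g i) = w i :=
    fun w => smul_eq_iff
  have hmin : ∀ w : Weights, w ∈ MulAction.fixedBy Weights g → ∀ i, w (cycleMin g i) = w i := by
    intro w hw i
    rw [key] at hw
    unfold cycleMin
    rcases min_choice i (min (rho g i) (rho g (rho g i))) with h | h <;> rw [h]
    rcases min_choice (rho g i) (rho g (rho g i)) with h | h <;> rw [h]
    · exact hw i
    · rw [hw, hw]
  let e : MulAction.fixedBy Weights g ≃ ({i // cycleMin g i = i} → ZMod 2) :=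
    { toFun := fun w i => w.1 i.1
      invFun := fun v => ⟨fun i => v ⟨cycleMin g i, cycleMin_idem g i⟩,
        (key _).2 fun i => by simp only [cycleMin_rho]⟩
      left_inv := fun w => Subtype.ext (funext fun i => hmin w.1 w.2 i)
      right_inv := fun v => funext fun i => by
        change v _ = v _
        congr 1
        exact Subtype.ext i.2 }
  rw [Fintype.card_congr e, Fintype.card_fun, ZMod.card]

/-- Burnside's lemma: the identity fixes `2 ^ 13` functions, the two rotations `2 ^ 5` and the
three reflections `2 ^ 8`. -/
theorem card_orbits :
    Nat.card (Quotient (MulAction.orbitRel (DihedralGroup 3) Weights)) = 1504 := by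
  have : Fintype (Quotient (MulAction.orbitRel (DihedralGroup 3) Weights)) := Fintype.ofFinite _
  have h := MulAction.sum_card_fixedBy_eq_card_orbits_mul_card_group (DihedralGroup 3) Weights
  simp only [card_fixedBy] at h
  have hs : ∑ g : DihedralGroup 3, 2 ^ Fintype.card {i // cycleMin g i = i} = 9024 := by
    decide +kernel
  rw [hs, DihedralGroup.card] at h
  rw [Nat.card_eq_fintype_card]
  omega

/-! ### The count -/

theorem SquagIso.symm {α : Type u} {β : Type v} {m : α → α → α} {m' : β → β → β}
    (h : SquagIso m m') : SquagIso m' m := by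
  obtain ⟨e, he⟩ := h
  refine ⟨e.symm, fun a b => ?_⟩
  rw [Equiv.symm_apply_eq, he]
  simp

theorem SquagIso.trans {α β γ : Type*} {m : α → α → α} {m' : β → β → β}
    {m'' : γ → γ → γ} (h : SquagIso m m') (h' : SquagIso m' m'') : SquagIso m m'' := by
  obtain ⟨e, he⟩ := h
  obtain ⟨f, hf⟩ := h'
  exact ⟨e.trans f, fun a b => by simp [he, hf]⟩

/-- The systems to be counted are those of the extensions with cocycle in normal form. -/
theorem counted_iff (T : Set (Finset (Fin 27))) :
    (IsSTS T ∧ ∃ x : Fin 27, (∀ y : Fin 27, IsVeblen T y ↔ y = x) ∧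
      ¬ ∃ e : Equiv.Perm (QuotPts T x),
          (∀ b : Finset (QuotPts T x),
            b ∈ QuotTriples T x ↔ b.image (e : QuotPts T x → QuotPts T x) ∈ QuotTriples T x) ∧
          orderOf e = 13) ↔
      ∃ (w : Weights) (m : Fin 27 → Fin 27 → Fin 27), IsSquag m ∧ T = triples m ∧
        SquagIso (extOp (nf w)) m := by
  constructor
  · rintro ⟨hT, x, hx, hq⟩
    obtain ⟨m, hm, rfl⟩ := hT.exists_squag
    obtain ⟨F, hF⟩ := exists_ext hm (by simp) ((isVeblen_iff hm x).1 ((hx x).2 rfl)) hq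
    obtain ⟨w, hw⟩ := exists_nf F
    exact ⟨w, m, hm, rfl, hw.symm.trans hF⟩
  · rintro ⟨w, m, hm, rfl, e, he⟩
    refine ⟨hm.isSTS, e none, fun y => ?_, quotient_ext hm e he⟩
    rw [isVeblen_iff hm]
    constructor
    · intro hy
      have hy' : IsVeb m y := hy
      have := hy'.iso e.symm fun a b => by rw [Equiv.symm_apply_eq, he]; simp
      rw [isVeb_ext_iff, Equiv.symm_apply_eq] at this
      exact this
    · rintro rfl
      exact isVeb_ext_none.iso e he

/-- There are exactly 1504 isomorphism classes of Steiner triple systems of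
order 27 with exactly one Veblen point `x` whose quotient system at `x` admits
no automorphism of order 13 (i.e. the quotient is the non-cyclic `STS(13)`). -/
theorem sts27_noncyclic_quotient_count :
    Nat.card (Quot (fun S₁ S₂ : {T : Set (Finset (Fin 27)) //
        IsSTS T ∧ ∃ x : Fin 27, (∀ y : Fin 27, IsVeblen T y ↔ y = x) ∧
          ¬ ∃ e : Equiv.Perm (QuotPts T x),
              (∀ b : Finset (QuotPts T x),
                b ∈ QuotTriples T x ↔ b.image (e : QuotPts T x → QuotPts T x) ∈ QuotTriples T x) ∧
              orderOf e = 13} => STSIso S₁.1 S₂.1)) = 1504 := by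
  rw [← card_orbits]
  choose W m hm hT hW using fun S : {T : Set (Finset (Fin 27)) //
      IsSTS T ∧ ∃ x : Fin 27, (∀ y : Fin 27, IsVeblen T y ↔ y = x) ∧
        ¬ ∃ e : Equiv.Perm (QuotPts T x),
            (∀ b : Finset (QuotPts T x),
              b ∈ QuotTriples T x ↔ b.image (e : QuotPts T x → QuotPts T x) ∈ QuotTriples T x) ∧
            orderOf e = 13} => (counted_iff S.1).1 S.2
  have key : ∀ w w' : Weights, SquagIso (extOp (nf w)) (extOp (nf w')) ↔
      (Quotient.mk (MulAction.orbitRel (DihedralGroup 3) Weights) w = Quotient.mk _ w') := by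
    intro w w'
    refine nf_iso_iff.trans ?_
    rw [eq_comm, Quotient.eq, MulAction.orbitRel_apply, MulAction.mem_orbit_iff]
    exact exists_congr fun g => smul_eq_iff.symm
  have hiso : ∀ S₁ S₂, STSIso S₁.1 S₂.1 ↔
      (Quotient.mk (MulAction.orbitRel (DihedralGroup 3) Weights) (W S₁) =
        Quotient.mk _ (W S₂)) := by
    intro S₁ S₂
    rw [← key, hT S₁, hT S₂, stsIso_iff (hm S₁) (hm S₂)]
    exact ⟨fun h => ((hW S₁).trans h).trans (hW S₂).symm,
      fun h => ((hW S₁).symm.trans h).trans (hW S₂)⟩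
  refine Nat.card_eq_of_bijective (Quot.lift (fun S => Quotient.mk _ (W S))
    fun S₁ S₂ h => (hiso S₁ S₂).1 h) ⟨?_, ?_⟩
  · rintro ⟨S₁⟩ ⟨S₂⟩ h
    exact Quot.sound ((hiso S₁ S₂).2 h)
  · rintro ⟨w⟩
    have ε : Option (Fin 13 × ZMod 2) ≃ Fin 27 :=
      Fintype.equivFinOfCardEq (by simp [ZMod.card])
    let μ : Fin 27 → Fin 27 → Fin 27 := fun a b => ε (extOp (nf w) (ε.symm a) (ε.symm b))
    have hsq := isSquag_ext (nf w)
    have hμ : IsSquag μ := ⟨fun a => by simp [μ, hsq.idem],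
      fun a b => by simp only [μ, hsq.comm], fun a b => by simp [μ, hsq.inv]⟩
    have hwμ : SquagIso (extOp (nf w)) μ := ⟨ε, fun u v => by simp [μ]⟩
    let S : {T : Set (Finset (Fin 27)) //
      IsSTS T ∧ ∃ x : Fin 27, (∀ y : Fin 27, IsVeblen T y ↔ y = x) ∧
        ¬ ∃ e : Equiv.Perm (QuotPts T x),
            (∀ b : Finset (QuotPts T x),
              b ∈ QuotTriples T x ↔ b.image (e : QuotPts T x → QuotPts T x) ∈ QuotTriples T x) ∧
            orderOf e = 13} := ⟨triples μ, (counted_iff _).2 ⟨w, μ, hμ, rfl, hwμ⟩⟩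
    have hS : SquagIso (m S) μ := (stsIso_iff (hm S) hμ).1 (by
      rw [← hT S]
      exact ⟨Equiv.refl _, fun t => by simp [S]⟩)
    exact ⟨Quot.mk _ S, (key _ _).1 (((hW S).trans hS).trans hwμ.symm)⟩
end

section
/- There are exactly 232 isomorphism classes of Steiner triple systems S of order 27 such that S has exactly one Veblen point x and the quotient system of S at x (a Steiner triple system of order 13) admits an automorphism of order 13 (i.e., the quotient is the cyclic STS(13)). -/
/-!
Let `x` be the Veblen point of such a system. The `26` other points are partitioned into `13` pairs,
the points of the quotient, and the Veblen condition says exactly that the triples over a block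
`{i, j, k}` of the quotient are the `{(i, r), (j, s), (k, t)}` with `r + s + t` a constant in
`ZMod 2` that depends only on the block. The system is therefore the quotient together with a
`ZMod 2`-valued function on its blocks, up to adding block sums of functions on the points (a change
of the names `0, 1` in the pairs).

A cyclic `STS(13)` is unique: after a relabelling its blocks are the translates of `{1, 3, 9}` and
`{2, 5, 6}` in `ZMod 13` (`exists_multiplier`, `exists_standard_labelling`). The incidence circulant
of the translates of `{1, 3, 9}` is invertible over `GF(2)` (`circulant_inverse`), so there is
exactly one change of names that makes the function vanish on these translates. What remains is a
colouring `ZMod 13 → ZMod 2` of the translates of `{2, 5, 6}`; this is the normal form `Framed`,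
whose existence is `exists_framed`. Conversely every colouring gives an admissible system, with no
Veblen point other than `x`, because the cyclic `STS(13)` has none (`framed_modelTriples`,
`Framed.isVeblen_iff`, `Framed.exists_aut`).

An isomorphism fixes the Veblen points, so it induces an automorphism of the cyclic `STS(13)`. These
are the `39` maps `x ↦ m * x + t` with `m ^ 3 = 1` (`eq_affine_of_hom`), and they preserve the
normalisation. Hence isomorphism classes are the orbits of this group on colourings
(`Framed.affine_of_iso`, `Framed.iso_of_affine`), and Burnside's lemma gives
`(2 ^ 13 + 12 * 2 + 26 * 2 ^ 5) / 39 = 232` of them (`card_colourings`).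
-/

universe u v

/-! ### The cyclic Steiner triple system of order 13 -/

/-- In the cyclic `STS(13)` on `ZMod 13` whose blocks are the translates of `{1, 3, 9}` and
`{2, 5, 6}`, the third point of the block through `0` and `k`, for `k ≠ 0`; the value at `0` is set
to `0`. -/
def thirdDiff : ZMod 13 → ZMod 13 :=
  fun k : Fin 13 => (![0, 10, 8, 4, 3, 7, 11, 5, 2, 12, 1, 6, 9] : Fin 13 → ZMod 13) k

/-- The third point of the block of the cyclic `STS(13)` through `i` and `j`, with
`third i i = i`. -/
def third (i j : ZMod 13) : ZMod 13 := i + thirdDiff (j - i)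

/-- `k` is one of the differences `±1, ±3, ±4` of the second base block `{2, 5, 6}`. -/
def IsSecond (k : ZMod 13) : Prop := k ∈ ([1, 3, 4, 9, 10, 12] : List (ZMod 13))

instance : DecidablePred IsSecond := fun k => inferInstanceAs (Decidable (k ∈ _))

/-- The value on the block through `i` and `j` of the `ZMod 2`-valued function on blocks which is `0`
on the translates of `{1, 3, 9}` and `f n` on `{n + 2, n + 5, n + 6}`. The translate `n` is read off
from the sum `3 * n` of that block, as `9 * 3 = 1` in `ZMod 13`. -/
def blockVal (f : ZMod 13 → ZMod 2) (i j : ZMod 13) : ZMod 2 :=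
  if IsSecond (j - i) then f (9 * (i + j + third i j)) else 0

lemma third_comm : ∀ i j, third i j = third j i := by decide +kernel
lemma third_third : ∀ i j, third i (third i j) = j := by decide +kernel
lemma third_self (i : ZMod 13) : third i i = i := by revert i; decide +kernel
lemma third_ne_left : ∀ i j, i ≠ j → third i j ≠ i := by decide +kernel
lemma third_ne_right : ∀ i j, i ≠ j → third i j ≠ j := by decide +kernel
lemma third_add (t i j : ZMod 13) : third (i + t) (j + t) = third i j + t := by
  simp only [third, add_sub_add_right_eq_sub]; ring

lemma isSecond_comm : ∀ i j : ZMod 13, IsSecond (j - i) ↔ IsSecond (i - j) := by decide +kernel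
lemma isSecond_third : ∀ i j : ZMod 13, IsSecond (third i j - i) ↔ IsSecond (j - i) := by
  decide +kernel

lemma blockVal_comm (f : ZMod 13 → ZMod 2) (i j : ZMod 13) :
    blockVal f i j = blockVal f j i := by
  simp only [blockVal, isSecond_comm i j, third_comm i j, add_comm i j]

lemma blockVal_third (f : ZMod 13 → ZMod 2) (i j : ZMod 13) :
    blockVal f i (third i j) = blockVal f i j := by
  simp only [blockVal, isSecond_third, third_third, add_right_comm i (third i j) j]

/-- The cube roots of unity `1, 3, 9` are multipliers of the cyclic `STS(13)`. -/
lemma third_mul : ∀ m : ZMod 13, m ^ 3 = 1 → ∀ i j, third (m * i) (m * j) = m * third i j := by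
  decide +kernel
lemma isSecond_mul : ∀ m : ZMod 13, m ^ 3 = 1 → ∀ k, IsSecond (m * k) ↔ IsSecond k := by
  decide +kernel

lemma third_affine {m : ZMod 13} (hm : m ^ 3 = 1) (t i j : ZMod 13) :
    third (m * i + t) (m * j + t) = m * third i j + t := by
  rw [third_add, third_mul m hm]

lemma blockVal_affine {m : ZMod 13} (hm : m ^ 3 = 1) (t : ZMod 13) (f : ZMod 13 → ZMod 2)
    (i j : ZMod 13) :
    blockVal f (m * i + t) (m * j + t) = blockVal (fun x => f (m * x + t)) i j := by
  have h1 : m * j + t - (m * i + t) = m * (j - i) := by ring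
  have h27 : (27 : ZMod 13) = 1 := by decide
  simp only [blockVal, third_affine hm, h1, isSecond_mul m hm]
  congr 2
  linear_combination t * h27

/-- The pairs `(l, d l)` that follow from `d k = v` when `d` satisfies `d (d l) = l` and
`d (-l) = d l - l`, the identities satisfied by the third-point function of any cyclic system. -/
def orb (k v : ZMod 13) : List (ZMod 13 × ZMod 13) :=
  [(k, v), (v, k), (-k, v - k), (v - k, -k), (-v, k - v), (k - v, -v)]

/-- `l` is contained in the graph of a partial function that never takes the value `0`. -/
def Consistent (l : List (ZMod 13 × ZMod 13)) : Prop :=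
  ∀ p ∈ l, p.2 ≠ 0 ∧ ∀ q ∈ l, p.1 = q.1 → p.2 = q.2

instance : DecidablePred Consistent := fun l => by unfold Consistent; infer_instance

/-- Exhaustive search over the third points `a, b, c` attached to the differences `1, 2, 4`: every
consistent choice determines the whole system, and this system is a multiple of the standard one. -/
lemma consistent_orbs : ∀ a, Consistent (orb 1 a) → ∀ b, Consistent (orb 1 a ++ orb 2 b) →
    ∀ c, Consistent (orb 1 a ++ orb 2 b ++ orb 4 c) →
    ∃ u : ZMod 13, u ≠ 0 ∧ ∀ k, k ≠ 0 →
      (u * k, u * thirdDiff k) ∈ orb 1 a ++ orb 2 b ++ orb 4 c := by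
  decide +kernel

/-- Uniqueness of the cyclic `STS(13)`: the third-point function `d` of any cyclic system on
`ZMod 13` is a multiple of `thirdDiff`. -/
lemma exists_multiplier (d : ZMod 13 → ZMod 13) (h0 : ∀ k, k ≠ 0 → d k ≠ 0)
    (hne : ∀ k, k ≠ 0 → d k ≠ k)
    (hd : ∀ k, k ≠ 0 → d (d k) = k) (hneg : ∀ k, k ≠ 0 → d (-k) = d k - k) :
    ∃ u : ZMod 13, u ≠ 0 ∧ ∀ k, k ≠ 0 → d (u * k) = u * thirdDiff k := by
  have horb : ∀ k, k ≠ 0 → ∀ p ∈ orb k (d k), d p.1 = p.2 ∧ p.2 ≠ 0 := by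
    intro k hk p hp
    have h1 := h0 k hk
    have h2 := hd k hk
    have h3 := hneg k hk
    have h4 := hneg (d k) h1
    have h5 : d k - k ≠ 0 := sub_ne_zero.2 (hne k hk)
    have h6 := hd (-k) (neg_ne_zero.2 hk)
    have h7 := hd (-d k) (neg_ne_zero.2 h1)
    have h8 : k - d k ≠ 0 := sub_ne_zero.2 (hne k hk).symm
    simp only [orb, List.mem_cons, List.not_mem_nil, or_false] at hp
    rcases hp with rfl | rfl | rfl | rfl | rfl | rfl
    · exact ⟨rfl, h1⟩
    · exact ⟨h2, hk⟩
    · exact ⟨h3, h5⟩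
    · exact ⟨by rw [← h3, h6], neg_ne_zero.2 hk⟩
    · exact ⟨by rw [h4, h2], h8⟩
    · refine ⟨?_, neg_ne_zero.2 h1⟩
      rw [h4, h2] at h7
      exact h7
  have hcons : ∀ l : List (ZMod 13 × ZMod 13), (∀ p ∈ l, d p.1 = p.2 ∧ p.2 ≠ 0) →
      Consistent l := fun l hl p hp =>
    ⟨(hl p hp).2, fun q hq hpq => by rw [← (hl p hp).1, ← (hl q hq).1, hpq]⟩
  have o1 := horb 1 (by decide)
  have o2 := horb 2 (by decide)
  have o4 := horb 4 (by decide)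
  have o12 : ∀ p ∈ orb 1 (d 1) ++ orb 2 (d 2), d p.1 = p.2 ∧ p.2 ≠ 0 := fun p hp =>
    (List.mem_append.1 hp).elim (o1 p) (o2 p)
  have o124 : ∀ p ∈ orb 1 (d 1) ++ orb 2 (d 2) ++ orb 4 (d 4), d p.1 = p.2 ∧ p.2 ≠ 0 :=
    fun p hp => (List.mem_append.1 hp).elim (o12 p) (o4 p)
  obtain ⟨u, hu, h⟩ := consistent_orbs _ (hcons _ o1) _ (hcons _ o12) _ (hcons _ o124)
  exact ⟨u, hu, fun k hk => (o124 _ (h k hk)).1⟩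

/-- If an automorphism of the cyclic `STS(13)` fixes `0` and sends `1` to `a` and `2` to `b`, then the
two ways `3 ∘ 1 = 4 ∘ 11` and `6 ∘ 3 = 4 ∘ 8` of reaching `9` and `7` already force `a` to be a
multiplier and `b = a * 2`. Here `∘` is the third point operation and all the images are written
in terms of `0`, `a` and `b`. -/
lemma rigid_zero : ∀ a b : ZMod 13, a ≠ 0 → b ≠ 0 → b ≠ a → b ≠ third 0 a →
    third (third (third b (third 0 a)) 0) a = third (third b (third 0 a)) (third a b) →
    third (third a (third 0 b)) (third (third b (third 0 a)) 0) =
      third (third b (third 0 a)) (third 0 b) →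
    a ^ 3 = 1 ∧ b = a * 2 := by
  decide +kernel

/-- The automorphisms of the cyclic `STS(13)` are the `39` maps `x ↦ m * x + t` with `m ^ 3 = 1`. -/
lemma eq_affine_of_hom (σ : ZMod 13 → ZMod 13) (hinj : Function.Injective σ)
    (hσ : ∀ i j, i ≠ j → σ (third i j) = third (σ i) (σ j)) :
    ∃ m t : ZMod 13, m ^ 3 = 1 ∧ ∀ x, σ x = m * x + t := by
  set τ : ZMod 13 → ZMod 13 := fun x => σ x + -σ 0 with hτ
  have τ0 : τ 0 = 0 := by simp [hτ]
  have τinj : Function.Injective τ := fun x y h => hinj (add_right_cancel h)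
  have τh : ∀ i j k, i ≠ j → third i j = k → τ k = third (τ i) (τ j) := by
    rintro i j _ hij rfl
    simp only [hτ]
    rw [third_add, hσ i j hij]
  have e10 := τh 0 1 10 (by decide) (by decide)
  have e8 := τh 0 2 8 (by decide) (by decide)
  have e11 := τh 1 2 11 (by decide) (by decide)
  have e6 := τh 1 8 6 (by decide) (by decide)
  have e5 := τh 2 6 5 (by decide) (by decide)
  have e4 := τh 2 10 4 (by decide) (by decide)
  have e3 := τh 4 0 3 (by decide) (by decide)
  have e12 := τh 4 6 12 (by decide) (by decide)
  have e7 := τh 4 8 7 (by decide) (by decide)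
  have e7' := τh 6 3 7 (by decide) (by decide)
  have e9 := τh 4 11 9 (by decide) (by decide)
  have e9' := τh 3 1 9 (by decide) (by decide)
  have n1 : τ 1 ≠ 0 := τ0 ▸ τinj.ne (by decide)
  have n2 : τ 2 ≠ 0 := τ0 ▸ τinj.ne (by decide)
  have n21 : τ 2 ≠ τ 1 := τinj.ne (by decide)
  have n210 : τ 2 ≠ τ 10 := τinj.ne (by decide)
  have z0 : τ 0 = τ 1 * 0 := by rw [τ0, mul_zero]
  obtain ⟨ha, hb⟩ := rigid_zero (τ 1) (τ 2) n1 n2 n21 (by rwa [← τ0, ← e10])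
    (by rw [← τ0, ← e10, ← e4, ← e3, ← e11, ← e9, ← e9'])
    (by rw [← τ0, ← e8, ← e6, ← e10, ← e4, ← e3, ← e7, ← e7'])
  have key : ∀ i j k, third i j = k → τ i = τ 1 * i → τ j = τ 1 * j →
      τ k = third (τ i) (τ j) → τ k = τ 1 * k := by
    rintro i j _ rfl hi hj h
    rw [h, hi, hj, third_mul _ ha]
  have z1 : τ 1 = τ 1 * 1 := (mul_one _).symm
  have z10 := key _ _ _ (by decide) z0 z1 e10
  have z8 := key _ _ _ (by decide) z0 hb e8
  have z11 := key _ _ _ (by decide) z1 hb e11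
  have z6 := key _ _ _ (by decide) z1 z8 e6
  have z5 := key _ _ _ (by decide) hb z6 e5
  have z4 := key _ _ _ (by decide) hb z10 e4
  have z3 := key _ _ _ (by decide) z4 z0 e3
  have z12 := key _ _ _ (by decide) z4 z6 e12
  have z7 := key _ _ _ (by decide) z4 z8 e7
  have z9 := key _ _ _ (by decide) z4 z11 e9
  have hall : ∀ x, τ x = τ 1 * x := by
    intro x
    fin_cases x
    exacts [z0, z1, hb, z3, z4, z5, z6, z7, z8, z9, z10, z11, z12]
  refine ⟨τ 1, σ 0, ha, fun x => ?_⟩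
  rw [← hall]
  simp [hτ]

/-- The circulant `X + X ^ 3 + X ^ 9`, the incidence matrix of the translates of `{1, 3, 9}`, is
invertible over `GF(2)`, with inverse the circulant of `{0, 2, 4, 5, 6, 10, 12}` up to the direction
of the shift. -/
lemma circulant_inverse (c : ZMod 13 → ZMod 2) (i : ZMod 13) :
    (([0, 2, 4, 5, 6, 10, 12] : List (ZMod 13)).map
      fun j => c (i + j + 1) + c (i + j + 3) + c (i + j + 9)).sum = c i := by
  simp only [List.map_cons, List.map_nil, List.sum_cons, List.sum_nil, add_assoc i]
  norm_num
  reduce_mod_char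
  ring_nf
  reduce_mod_char

/-! ### Model systems of order 27 -/

section Triples

variable {α : Type u} [DecidableEq α] {T : Set (Finset α)} {a b c d : α}

lemma triple_swap_left (h : ({a, b, c} : Finset α) ∈ T) : ({b, a, c} : Finset α) ∈ T := by
  rwa [Finset.insert_comm]

lemma triple_swap_right (h : ({a, b, c} : Finset α) ∈ T) : ({a, c, b} : Finset α) ∈ T := by
  rwa [Finset.pair_comm]

lemma triple_rotate (h : ({a, b, c} : Finset α) ∈ T) : ({b, c, a} : Finset α) ∈ T :=
  triple_swap_right (triple_swap_left h)

lemma IsSTS.ne (hT : IsSTS T) (h : ({a, b, c} : Finset α) ∈ T) : a ≠ b ∧ a ≠ c ∧ b ≠ c := by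
  have h3 := hT.1 _ h
  refine ⟨?_, ?_, ?_⟩ <;> rintro rfl
  · have := Finset.card_le_two (a := a) (b := c)
    simp at h3; omega
  · have := Finset.card_le_two (a := b) (b := a)
    rw [Finset.insert_comm] at h3
    simp at h3; omega
  · have := Finset.card_le_two (a := a) (b := b)
    simp at h3; omega

lemma IsSTS.unique (hT : IsSTS T) (h : ({a, b, c} : Finset α) ∈ T)
    (h' : ({a, b, d} : Finset α) ∈ T) : c = d := by
  obtain ⟨hab, hac, hbc⟩ := hT.ne h
  have he : ({a, b, c} : Finset α) = {a, b, d} :=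
    (hT.2 a b hab).unique ⟨h, by simp, by simp⟩ ⟨h', by simp, by simp⟩
  have hc : c ∈ ({a, b, d} : Finset α) := he ▸ by simp
  simp only [Finset.mem_insert, Finset.mem_singleton] at hc
  rcases hc with rfl | rfl | rfl
  · exact absurd rfl hac
  · exact absurd rfl hbc
  · rfl

lemma eq_triple_of_mem {t : Finset α} (ht : t.card = 3) (ha : a ∈ t) (hb : b ∈ t) (hab : a ≠ b) :
    ∃ c, t = {a, b, c} := by
  have hb' : b ∈ t.erase a := Finset.mem_erase.2 ⟨hab.symm, hb⟩
  have h1 : ((t.erase a).erase b).card = 1 := by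
    rw [Finset.card_erase_of_mem hb', Finset.card_erase_of_mem ha, ht]
  obtain ⟨c, hc⟩ := Finset.card_eq_one.1 h1
  refine ⟨c, ?_⟩
  rw [← hc, Finset.insert_erase hb', Finset.insert_erase ha]

lemma exists_triple_of_mem {t : Finset α} (ht : t.card = 3) (ha : a ∈ t) :
    ∃ b c, t = {a, b, c} := by
  obtain ⟨b, hb, hba⟩ := Finset.exists_mem_ne (by omega : 1 < t.card) a
  exact ⟨b, eq_triple_of_mem ht ha hb hba.symm⟩

lemma IsSTS.exists_third (hT : IsSTS T) (hab : a ≠ b) : ∃ c, ({a, b, c} : Finset α) ∈ T := by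
  obtain ⟨t, ⟨ht, ha, hb⟩, -⟩ := hT.2 a b hab
  obtain ⟨c, rfl⟩ := eq_triple_of_mem (hT.1 t ht) ha hb hab
  exact ⟨c, ht⟩

lemma STSIso.of_triples {β : Type v} [DecidableEq β] {U : Set (Finset β)} (hT : IsSTS T)
    (hU : IsSTS U) (e : α ≃ β)
    (h : ∀ a b c, ({a, b, c} : Finset α) ∈ T ↔ ({e a, e b, e c} : Finset β) ∈ U) :
    STSIso T U := by
  refine ⟨e, fun t => ?_⟩
  by_cases ht : t.card = 3
  · obtain ⟨a, b, c, -, -, -, rfl⟩ := Finset.card_eq_three.1 ht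
    rw [h]
    simp [Finset.image_insert]
  · refine ⟨fun h' => absurd (hT.1 t h') ht, fun h' => absurd ?_ ht⟩
    rw [← hU.1 _ h', Finset.card_image_of_injective _ e.injective]

end Triples

/-- The points of the model systems: `none` is the Veblen point, and `some (i, 0)`, `some (i, 1)` are
the two other points on the triple through `none` that is the point `i` of the quotient. -/
abbrev Pt : Type := Option (ZMod 13 × ZMod 2)

/-- The third point of the triple through two distinct points of the model system attached to the
colouring `f` of the translates of `{2, 5, 6}`; the value at two equal points is that point. -/
def thirdPt (f : ZMod 13 → ZMod 2) : Pt → Pt → Pt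
  | none, none => none
  | none, some (i, s) => some (i, s + 1)
  | some (i, s), none => some (i, s + 1)
  | some (i, s), some (j, t) =>
    if i = j then if s = t then some (i, s) else none
    else some (third i j, s + t + blockVal f i j)

section Model

variable (f : ZMod 13 → ZMod 2)

lemma thirdPt_of_ne {i j : ZMod 13} (h : i ≠ j) (s t : ZMod 2) :
    thirdPt f (some (i, s)) (some (j, t)) = some (third i j, s + t + blockVal f i j) := by
  simp [thirdPt, h]

lemma thirdPt_of_eq (i : ZMod 13) {s t : ZMod 2} (h : s ≠ t) :
    thirdPt f (some (i, s)) (some (i, t)) = none := by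
  simp [thirdPt, h]

lemma add_one_of_ne : ∀ s t : ZMod 2, s ≠ t → s + 1 = t := by decide
lemma add_one_ne : ∀ s : ZMod 2, s ≠ s + 1 := by decide
lemma add_one_add_one : ∀ s : ZMod 2, s + 1 + 1 = s := by decide

lemma add_add_add_cancel : ∀ s t w : ZMod 2, s + (s + t + w) + w = t := by decide

lemma some_ne_some {i j : ZMod 13} (h : i ≠ j) (s t : ZMod 2) :
    (some (i, s) : Pt) ≠ some (j, t) := by simp [h]

lemma thirdPt_comm (a b : Pt) : thirdPt f a b = thirdPt f b a := by
  rcases a with _ | ⟨i, s⟩ <;> rcases b with _ | ⟨j, t⟩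
  · rfl
  · rfl
  · rfl
  · by_cases hij : i = j
    · subst hij
      by_cases hst : s = t
      · rw [hst]
      · rw [thirdPt_of_eq f i hst, thirdPt_of_eq f i (Ne.symm hst)]
    · rw [thirdPt_of_ne f hij, thirdPt_of_ne f (Ne.symm hij), third_comm i j, blockVal_comm f i j,
        add_comm s t]

lemma thirdPt_ne_left {a b : Pt} (hab : a ≠ b) : thirdPt f a b ≠ a := by
  rcases a with _ | ⟨i, s⟩ <;> rcases b with _ | ⟨j, t⟩
  · exact absurd rfl hab
  · simp [thirdPt]
  · simp [thirdPt]
  · by_cases hij : i = j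
    · subst hij
      rw [thirdPt_of_eq f i (by rintro rfl; exact hab rfl)]
      simp
    · rw [thirdPt_of_ne f hij]
      intro h
      simp only [Option.some.injEq, Prod.mk.injEq] at h
      exact third_ne_left i j hij h.1

lemma thirdPt_thirdPt {a b : Pt} (hab : a ≠ b) : thirdPt f a (thirdPt f a b) = b := by
  rcases a with _ | ⟨i, s⟩ <;> rcases b with _ | ⟨j, t⟩
  · exact absurd rfl hab
  · simp [thirdPt, add_one_add_one]
  · exact thirdPt_of_eq f i (add_one_ne s)
  · by_cases hij : i = j
    · subst hij
      have hst : s ≠ t := by rintro rfl; exact hab rfl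
      rw [thirdPt_of_eq f i hst]
      simp [thirdPt, add_one_of_ne s t hst]
    · rw [thirdPt_of_ne f hij, thirdPt_of_ne f (third_ne_left i j hij).symm, third_third,
        blockVal_third]
      congr 2
      exact add_add_add_cancel s t _

lemma thirdPt_ne_right {a b : Pt} (hab : a ≠ b) : thirdPt f a b ≠ b := by
  rw [thirdPt_comm]; exact thirdPt_ne_left f hab.symm

/-- The triples of the model system of the colouring `f`, transported along `p`. -/
def modelTriples {α : Type u} [DecidableEq α] (p : Pt ≃ α) : Set (Finset α) :=
  {t | ∃ a b, a ≠ b ∧ t = {p a, p b, p (thirdPt f a b)}}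

end Model

/-- `T` is the triple set of a Steiner triple system which `p` identifies with the model system of
the colouring `f`. -/
structure Framed {α : Type u} [DecidableEq α] (T : Set (Finset α)) (p : Pt ≃ α)
    (f : ZMod 13 → ZMod 2) : Prop where
  sts : IsSTS T
  mem : ∀ a b, a ≠ b → ({p a, p b, p (thirdPt f a b)} : Finset α) ∈ T

section Framed

variable {α : Type u} [DecidableEq α]

lemma framed_modelTriples (p : Pt ≃ α) (f : ZMod 13 → ZMod 2) :
    Framed (modelTriples f p) p f := by
  refine ⟨⟨?_, ?_⟩, fun a b hab => ⟨a, b, hab, rfl⟩⟩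
  · rintro _ ⟨a, b, hab, rfl⟩
    refine Finset.card_eq_three.2 ⟨_, _, _, p.injective.ne hab,
      p.injective.ne (thirdPt_ne_left f hab).symm, p.injective.ne (thirdPt_ne_right f hab).symm, rfl⟩
  · -- Two distinct points of a model triple determine it.
    have key : ∀ a b c d : Pt, a ≠ b → c ≠ d → p c ∈ ({p a, p b, p (thirdPt f a b)} : Finset α) →
        p d ∈ ({p a, p b, p (thirdPt f a b)} : Finset α) →
        ({p a, p b, p (thirdPt f a b)} : Finset α) = {p c, p d, p (thirdPt f c d)} := by
      intro a b c d hab hcd hc hd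
      have h1 : thirdPt f a (thirdPt f a b) = b := thirdPt_thirdPt f hab
      have h2 : thirdPt f b (thirdPt f a b) = a := by
        rw [thirdPt_comm f a b]; exact thirdPt_thirdPt f hab.symm
      have h3 : thirdPt f b a = thirdPt f a b := thirdPt_comm f b a
      have h4 : thirdPt f (thirdPt f a b) a = b := by rw [thirdPt_comm, h1]
      have h5 : thirdPt f (thirdPt f a b) b = a := by rw [thirdPt_comm, h2]
      simp only [Finset.mem_insert, Finset.mem_singleton, EmbeddingLike.apply_eq_iff_eq] at hc hd
      generalize h6 : thirdPt f a b = e at *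
      rcases hc with rfl | rfl | rfl <;> rcases hd with rfl | rfl | rfl <;>
        first
        | exact absurd rfl hcd
        | (simp only [*]; done)
        | (simp only [*]; ext z; simp only [Finset.mem_insert, Finset.mem_singleton]; tauto)
    intro x y hxy
    obtain ⟨c, rfl⟩ := p.surjective x
    obtain ⟨d, rfl⟩ := p.surjective y
    have hcd : c ≠ d := fun h => hxy (congrArg p h)
    refine ⟨_, ⟨⟨c, d, hcd, rfl⟩, by simp, by simp⟩, ?_⟩
    rintro _ ⟨⟨a, b, hab, rfl⟩, hc, hd⟩
    exact key a b c d hab hcd hc hd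

variable {T : Set (Finset α)} {p : Pt ≃ α} {f : ZMod 13 → ZMod 2}

lemma Framed.mem_iff (h : Framed T p f) (a b c : Pt) :
    ({p a, p b, p c} : Finset α) ∈ T ↔ a ≠ b ∧ c = thirdPt f a b := by
  constructor
  · intro habc
    have hab : a ≠ b := fun hab => (h.sts.ne habc).1 (congrArg p hab)
    exact ⟨hab, p.injective (h.sts.unique habc (h.mem a b hab))⟩
  · rintro ⟨hab, rfl⟩
    exact h.mem a b hab

/-- A failure of the Veblen condition at the point `i` of the cyclic `STS(13)`, with the lines
`{i, i + 1, i + 10}`, `{i, i + 2, i + 8}` and `{i + 11, i + 1, i + 2}`. -/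
lemma not_veblen_base : ∀ i : ZMod 13, third i (i + 1) = i + 10 ∧ third i (i + 2) = i + 8 ∧
    third (i + 1) (i + 2) = i + 11 ∧ third (i + 11) (i + 10) ≠ i + 8 ∧
    i ≠ i + 1 ∧ i ≠ i + 2 ∧ i + 1 ≠ i + 2 ∧ i + 11 ≠ i + 10 := by decide +kernel

/-- The cyclic `STS(13)` has no Veblen point, so neither has the model away from `none`. -/
lemma Framed.isVeblen_iff (h : Framed T p f) (y : α) : IsVeblen T y ↔ y = p none := by
  constructor
  · intro hy
    obtain ⟨y, rfl⟩ := p.surjective y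
    rcases y with _ | ⟨i, s⟩
    · rfl
    exfalso
    obtain ⟨e1, e2, e3, e4, n1, n2, n12, n3⟩ := not_veblen_base i
    have ha := h.mem (some (i, s)) (some (i + 1, 0)) (some_ne_some n1 _ _)
    have hc := h.mem (some (i, s)) (some (i + 2, 0)) (some_ne_some n2 _ _)
    have ht := triple_swap_left (triple_swap_right
      (h.mem (some (i + 1, 0)) (some (i + 2, 0)) (some_ne_some n12 _ _)))
    rw [thirdPt_of_ne f n1, e1] at ha
    rw [thirdPt_of_ne f n2, e2] at hc
    rw [thirdPt_of_ne f n12, e3] at ht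
    have hd := ((h.mem_iff _ _ _).1 (hy _ _ _ _ _ ha hc ht)).2
    rw [thirdPt_of_ne f n3] at hd
    simp only [Option.some.injEq, Prod.mk.injEq] at hd
    exact e4 hd.1.symm
  · rintro rfl a b c d t hab hcd hac
    obtain ⟨a, rfl⟩ := p.surjective a
    obtain ⟨b, rfl⟩ := p.surjective b
    obtain ⟨c, rfl⟩ := p.surjective c
    obtain ⟨d, rfl⟩ := p.surjective d
    obtain ⟨t, rfl⟩ := p.surjective t
    rw [h.mem_iff] at *
    obtain ⟨na, rfl⟩ := hab
    obtain ⟨nc, rfl⟩ := hcd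
    obtain ⟨nt, rfl⟩ := hac
    rcases a with _ | ⟨i, s⟩
    · exact absurd rfl na
    rcases t with _ | ⟨k, v⟩
    · exact ⟨by simp [thirdPt], rfl⟩
    by_cases hki : k = i
    · subst hki
      rw [thirdPt_of_eq f k (by rintro rfl; exact nt rfl)] at nc
      exact absurd rfl nc
    · rw [thirdPt_of_ne f hki]
      simp only [thirdPt, hki, if_false]
      refine ⟨by simp [hki], ?_⟩
      congr 2
      ring

end Framed

/-! ### Quotients and isomorphisms of model systems -/

section FramedQuotient

variable {α : Type u} [DecidableEq α] {T : Set (Finset α)} {p : Pt ≃ α} {f : ZMod 13 → ZMod 2}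

lemma zmod_two_cases : ∀ s : ZMod 2, s = 0 ∨ s = 1 := by decide

/-- The triple through the Veblen point that is the point `i` of the quotient. -/
def Framed.fibre (h : Framed T p f) (i : ZMod 13) : QuotPts T (p none) :=
  ⟨{p none, p (some (i, 0)), p (some (i, 1))}, h.mem none (some (i, 0)) (by simp), by simp⟩

lemma Framed.mem_fibre (h : Framed T p f) (i j : ZMod 13) (s : ZMod 2) :
    p (some (i, s)) ∈ (h.fibre j).1 ↔ i = j := by
  simp only [Framed.fibre, Finset.mem_insert, Finset.mem_singleton,
    EmbeddingLike.apply_eq_iff_eq, reduceCtorEq, false_or, Option.some.injEq, Prod.mk.injEq,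
    ← and_or_left, zmod_two_cases s, and_true]

lemma Framed.fibre_bijective (h : Framed T p f) : Function.Bijective h.fibre := by
  constructor
  · intro i j hij
    exact (h.mem_fibre i j 0).1 (hij ▸ (h.mem_fibre i i 0).2 rfl)
  · rintro ⟨t, ht, hx⟩
    obtain ⟨b, c, rfl⟩ := exists_triple_of_mem (h.sts.1 t ht) hx
    obtain ⟨b, rfl⟩ := p.surjective b
    obtain ⟨c, rfl⟩ := p.surjective c
    obtain ⟨hb, rfl⟩ := (h.mem_iff _ _ _).1 ht
    rcases b with _ | ⟨i, s⟩
    · exact absurd rfl hb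
    refine ⟨i, (Subtype.ext ?_)⟩
    rcases zmod_two_cases s with rfl | rfl
    · rfl
    · change ({p none, p (some (i, 0)), p (some (i, 1))} : Finset α) =
        {p none, p (some (i, 1)), p (some (i, 1 + 1))}
      rw [CharTwo.add_self_eq_zero, Finset.pair_comm]

lemma Framed.mem_quotTriples (h : Framed T p f) (b : Finset (QuotPts T (p none))) :
    b ∈ QuotTriples T (p none) ↔
      ∃ i j, i ≠ j ∧ b = {h.fibre i, h.fibre j, h.fibre (third i j)} := by
  constructor
  · rintro ⟨T1, T2, T3, h12, -, -, rfl, a, ha, hax, c, hc, hcx, d, hd, hd3⟩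
    obtain ⟨i, rfl⟩ := h.fibre_bijective.2 T1
    obtain ⟨j, rfl⟩ := h.fibre_bijective.2 T2
    obtain ⟨k, rfl⟩ := h.fibre_bijective.2 T3
    obtain ⟨_ | ⟨i', s⟩, rfl⟩ := p.surjective a
    · exact absurd rfl hax
    obtain ⟨_ | ⟨j', t⟩, rfl⟩ := p.surjective c
    · exact absurd rfl hcx
    obtain ⟨d, rfl⟩ := p.surjective d
    obtain rfl := (h.mem_fibre _ _ _).1 ha
    obtain rfl := (h.mem_fibre _ _ _).1 hc
    have hij : i' ≠ j' := fun hij => h12 (congrArg _ hij)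
    obtain ⟨-, rfl⟩ := (h.mem_iff _ _ _).1 hd
    rw [thirdPt_of_ne f hij] at hd3
    obtain rfl := (h.mem_fibre _ _ _).1 hd3
    exact ⟨i', j', hij, rfl⟩
  · rintro ⟨i, j, hij, rfl⟩
    have hinj := h.fibre_bijective.1
    refine ⟨_, _, _, hinj.ne hij, hinj.ne (third_ne_left i j hij).symm,
      hinj.ne (third_ne_right i j hij).symm, rfl, p (some (i, 0)), (h.mem_fibre _ _ _).2 rfl,
      by simp, p (some (j, 0)), (h.mem_fibre _ _ _).2 rfl, by simp, _,
      h.mem _ _ (some_ne_some hij _ _), ?_⟩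
    rw [thirdPt_of_ne f hij]
    exact (h.mem_fibre _ _ _).2 rfl

lemma orderOf_addRight_one : orderOf (Equiv.addRight (1 : ZMod 13)) = 13 := by
  have : Fact (Nat.Prime 13) := ⟨by norm_num⟩
  refine orderOf_eq_prime ?_ ?_
  · decide +kernel
  · decide +kernel

/-- Translation by `1` is an automorphism of order `13` of the quotient of a framed system. -/
lemma Framed.exists_aut (h : Framed T p f) : ∃ e : Equiv.Perm (QuotPts T (p none)),
    (∀ b : Finset (QuotPts T (p none)), b ∈ QuotTriples T (p none) ↔
      b.image (e : QuotPts T (p none) → QuotPts T (p none)) ∈ QuotTriples T (p none)) ∧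
    orderOf e = 13 := by
  let E : ZMod 13 ≃ QuotPts T (p none) := Equiv.ofBijective h.fibre h.fibre_bijective
  let e : Equiv.Perm (QuotPts T (p none)) := E.permCongrHom (Equiv.addRight 1)
  have he : ∀ i, e (h.fibre i) = h.fibre (i + 1) := by
    intro i
    have : E.symm (h.fibre i) = i := E.symm_apply_apply i
    simp only [e, Equiv.permCongrHom_coe, Equiv.permCongr_apply, this]
    rfl
  have he' : ∀ i, e.symm (h.fibre i) = h.fibre (i - 1) := by
    intro i
    rw [Equiv.symm_apply_eq, he, sub_add_cancel]
  refine ⟨e, fun b => ?_, ?_⟩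
  · rw [h.mem_quotTriples, h.mem_quotTriples]
    constructor
    · rintro ⟨i, j, hij, rfl⟩
      refine ⟨i + 1, j + 1, fun hh => hij (add_right_cancel hh), ?_⟩
      simp only [Finset.image_insert, Finset.image_singleton, he, third_add]
    · rintro ⟨i, j, hij, hb⟩
      refine ⟨i - 1, j - 1, fun hh => hij (sub_left_injective hh), ?_⟩
      have h1 : b = (b.image e).image e.symm := by
        rw [Finset.image_image]; simp
      rw [h1, hb]
      simp only [Finset.image_insert, Finset.image_singleton, he', sub_eq_add_neg, third_add]
  · exact (MulEquiv.orderOf_eq E.permCongrHom _).trans orderOf_addRight_one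

end FramedQuotient

section Iso

variable {α : Type u} [DecidableEq α] {β : Type v} [DecidableEq β]
  {T : Set (Finset α)} {p : Pt ≃ α} {f : ZMod 13 → ZMod 2}
  {U : Set (Finset β)} {q : Pt ≃ β} {g : ZMod 13 → ZMod 2}

lemma eq_zero_of_sums {g : ZMod 13 → ZMod 2} (h : ∀ i, g (i + 1) + g (i + 3) + g (i + 9) = 0)
    (i : ZMod 13) : g i = 0 := by
  rw [← circulant_inverse g i]
  simp [h]

lemma blockVal_first (f : ZMod 13 → ZMod 2) (i : ZMod 13) : blockVal f (i + 1) (i + 3) = 0 := by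
  have h : ¬ IsSecond (i + 3 - (i + 1)) := by revert i; decide +kernel
  rw [blockVal, if_neg h]

lemma blockVal_second (f : ZMod 13 → ZMod 2) (i : ZMod 13) :
    blockVal f (i + 2) (i + 5) = f i := by
  have h : IsSecond (i + 5 - (i + 2)) ∧ 9 * (i + 2 + (i + 5) + third (i + 2) (i + 5)) = i := by
    revert i; decide +kernel
  rw [blockVal, if_pos h.1, h.2]

lemma third_first : ∀ i : ZMod 13, i + 1 ≠ i + 3 ∧ third (i + 1) (i + 3) = i + 9 := by
  decide +kernel

lemma third_second : ∀ i : ZMod 13, i + 2 ≠ i + 5 ∧ third (i + 2) (i + 5) = i + 6 := by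
  decide +kernel

lemma IsVeblen.map {x : α} (hx : IsVeblen T x) (e : α ≃ β)
    (he : ∀ t : Finset α, t ∈ T ↔ t.image (e : α → β) ∈ U) : IsVeblen U (e x) := by
  have h3 : ∀ a b c, ({e a, e b, e c} : Finset β) ∈ U ↔ ({a, b, c} : Finset α) ∈ T := by
    intro a b c
    rw [he]
    simp [Finset.image_insert]
  intro a b c d t hab hcd hac
  obtain ⟨a, rfl⟩ := e.surjective a
  obtain ⟨b, rfl⟩ := e.surjective b
  obtain ⟨c, rfl⟩ := e.surjective c
  obtain ⟨d, rfl⟩ := e.surjective d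
  obtain ⟨t, rfl⟩ := e.surjective t
  rw [h3] at *
  exact hx a b c d t hab hcd hac

/-- An isomorphism of framed systems fixes the Veblen point and has the form
`(i, s) ↦ (σ i, s + w i)`. Here `σ` is affine, and since the colouring vanishes on the translates
of `{1, 3, 9}` on both sides, `w` is killed by an invertible circulant and vanishes. -/
lemma Framed.affine_of_iso (hT : Framed T p f) (hU : Framed U q g) (h : STSIso T U) :
    ∃ m t : ZMod 13, m ^ 3 = 1 ∧ ∀ x, f x = g (m * x + t) := by
  obtain ⟨e, he⟩ := h
  set Φ : Pt ≃ Pt := p.trans (e.trans q.symm) with hΦ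
  have hqΦ : ∀ a, q (Φ a) = e (p a) := fun a => by simp [hΦ]
  have hmul : ∀ a b, a ≠ b → Φ (thirdPt f a b) = thirdPt g (Φ a) (Φ b) := by
    intro a b hab
    have h1 := (he _).1 (hT.mem a b hab)
    simp only [Finset.image_insert, Finset.image_singleton, ← hqΦ] at h1
    exact ((hU.mem_iff _ _ _).1 h1).2
  have hnone : Φ none = none := by
    apply q.injective
    rw [hqΦ, ← hU.isVeblen_iff]
    exact ((hT.isVeblen_iff _).2 rfl).map e he
  have hsome : ∀ i : ZMod 13, ∃ y : ZMod 13 × ZMod 2, Φ (some (i, 0)) = some y := by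
    intro i
    refine Option.ne_none_iff_exists'.1 fun hh => ?_
    simpa using Φ.injective (hh.trans hnone.symm)
  choose y hy using hsome
  set σ : ZMod 13 → ZMod 13 := fun i => (y i).1
  set w : ZMod 13 → ZMod 2 := fun i => (y i).2
  have hΦ1 : ∀ i s, Φ (some (i, s)) = some (σ i, s + w i) := by
    have h0 : ∀ i, Φ (some (i, 0)) = some (σ i, w i) := hy
    intro i s
    rcases zmod_two_cases s with rfl | rfl
    · rw [h0, zero_add]
    · have h1 := hmul none (some (i, 0)) (by simp)
      rw [hnone, h0] at h1
      simp only [thirdPt, zero_add] at h1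
      rw [h1, add_comm]
  have σinj : Function.Injective σ := by
    intro i j hij
    have h1 : Φ (some (i, w i)) = Φ (some (j, w j)) := by
      rw [hΦ1, hΦ1, hij, CharTwo.add_self_eq_zero, CharTwo.add_self_eq_zero]
    have h2 := Φ.injective h1
    simp only [Option.some.injEq, Prod.mk.injEq] at h2
    exact h2.1
  have hblock : ∀ i j, i ≠ j → σ (third i j) = third (σ i) (σ j) ∧
      blockVal f i j + w (third i j) = w i + w j + blockVal g (σ i) (σ j) := by
    intro i j hij
    have h1 := hmul (some (i, 0)) (some (j, 0)) (some_ne_some hij _ _)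
    rw [thirdPt_of_ne f hij, hΦ1, hΦ1, hΦ1, thirdPt_of_ne g (σinj.ne hij)] at h1
    simpa using h1
  obtain ⟨m, t, hm, hσ⟩ := eq_affine_of_hom σ σinj fun i j hij => (hblock i j hij).1
  have hw : ∀ i, w i = 0 := by
    refine eq_zero_of_sums fun i => ?_
    obtain ⟨hne, hthird⟩ := third_first i
    have h1 := (hblock _ _ hne).2
    rw [hthird, hσ, hσ, blockVal_affine hm, blockVal_first, blockVal_first, zero_add, add_zero] at h1
    rw [h1, CharTwo.add_self_eq_zero]
  refine ⟨m, t, hm, fun x => ?_⟩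
  have h1 := (hblock _ _ (third_second x).1).2
  rwa [hσ, hσ, blockVal_affine hm, blockVal_second, blockVal_second, hw, hw, hw, add_zero, zero_add,
    zero_add] at h1

lemma Framed.iso_of_affine (hT : Framed T p f) (hU : Framed U q g) (σ : Equiv.Perm (ZMod 13))
    {m t : ZMod 13} (hm : m ^ 3 = 1) (hσ : ∀ x, σ x = m * x + t) (hfg : ∀ x, f x = g (σ x)) :
    STSIso T U := by
  let Φ : Pt ≃ Pt := Equiv.optionCongr (Equiv.prodCongr σ (Equiv.refl _))
  have hΦ0 : Φ none = none := rfl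
  have hΦ1 : ∀ i s, Φ (some (i, s)) = some (σ i, s) := fun _ _ => rfl
  have hf : f = fun x => g (m * x + t) := funext fun x => by rw [hfg, hσ]
  have hmul : ∀ a b, a ≠ b → Φ (thirdPt f a b) = thirdPt g (Φ a) (Φ b) := by
    intro a b hab
    rcases a with _ | ⟨i, s⟩ <;> rcases b with _ | ⟨j, r⟩
    · rfl
    · rfl
    · rfl
    · by_cases hij : i = j
      · subst hij
        have hsr : s ≠ r := by rintro rfl; exact hab rfl
        rw [thirdPt_of_eq f i hsr, hΦ1, hΦ1, thirdPt_of_eq g _ hsr, hΦ0]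
      · rw [thirdPt_of_ne f hij, hΦ1, hΦ1, hΦ1, thirdPt_of_ne g (σ.injective.ne hij), hσ, hσ, hσ,
          third_affine hm, blockVal_affine hm, ← hf]
  refine STSIso.of_triples hT.sts hU.sts (p.symm.trans (Φ.trans q)) fun a b c => ?_
  obtain ⟨a, rfl⟩ := p.surjective a
  obtain ⟨b, rfl⟩ := p.surjective b
  obtain ⟨c, rfl⟩ := p.surjective c
  simp only [Equiv.trans_apply, Equiv.symm_apply_apply]
  rw [hT.mem_iff, hU.mem_iff, Φ.injective.ne_iff]
  refine and_congr_right fun hab => ?_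
  rw [← hmul a b hab, Φ.injective.eq_iff]

end Iso

/-! ### Existence of the normal form -/

/-- A symmetric ternary relation depends only on the set of its three arguments. -/
lemma rel_of_insert_eq {β : Type v} [DecidableEq β] {W : β → β → β → Prop}
    (h1 : ∀ {a b c}, W a b c → W b a c) (h2 : ∀ {a b c}, W a b c → W a c b)
    {a b c a' b' c' : β} (hab : a ≠ b) (hac : a ≠ c) (hbc : b ≠ c)
    (h : ({a, b, c} : Finset β) = {a', b', c'}) (hW : W a b c) : W a' b' c' := by
  have ha : a ∈ ({a', b', c'} : Finset β) := h ▸ by simp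
  have hb : b ∈ ({a', b', c'} : Finset β) := h ▸ by simp
  have hc : c ∈ ({a', b', c'} : Finset β) := h ▸ by simp
  simp only [Finset.mem_insert, Finset.mem_singleton] at ha hb hc
  rcases ha with rfl | rfl | rfl <;> rcases hb with rfl | rfl | rfl <;>
    rcases hc with rfl | rfl | rfl <;>
    first
    | exact absurd rfl hab
    | exact absurd rfl hac
    | exact absurd rfl hbc
    | exact hW
    | exact h1 hW
    | exact h2 hW
    | exact h1 (h2 hW)
    | exact h2 (h1 hW)
    | exact h1 (h2 (h1 hW))

/-- A permutation of order `13` of `13` points is a `13`-cycle, that is, translation by `1` on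
`ZMod 13` for a suitable labelling. -/
lemma exists_cyclic_labelling {P : Type u} [Fintype P] (hP : Fintype.card P = 13)
    {e : Equiv.Perm P} (he : orderOf e = 13) :
    ∃ ε : ZMod 13 ≃ P, ∀ i, ε (i + 1) = e (ε i) := by
  have hne : e ≠ 1 := by
    rintro rfl
    simp at he
  obtain ⟨q, hq⟩ : ∃ q, e q ≠ q := by
    by_contra! h
    exact hne (Equiv.ext h)
  have hper : Function.IsPeriodicPt e 13 q := by
    have h13 : e ^ 13 = 1 := he ▸ pow_orderOf_eq_one e
    rw [Function.IsPeriodicPt, Function.IsFixedPt, ← Equiv.Perm.coe_pow, h13]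
    rfl
  have hmin : Function.minimalPeriod e q = 13 := by
    rcases (Nat.dvd_prime (by norm_num)).1 hper.minimalPeriod_dvd with h | h
    · exact absurd (Function.minimalPeriod_eq_one_iff_isFixedPt.1 h) hq
    · exact h
  let φ : ZMod 13 → P := fun i => e^[i.val] q
  have hinj : Function.Injective φ := by
    intro i j hij
    apply ZMod.val_injective
    exact Function.iterate_injOn_Iio_minimalPeriod (f := e) (x := q)
      (by rw [hmin]; exact ZMod.val_lt i) (by rw [hmin]; exact ZMod.val_lt j) hij
  have hbij : Function.Bijective φ :=
    (Fintype.bijective_iff_injective_and_card φ).2 ⟨hinj, by rw [ZMod.card, hP]⟩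
  refine ⟨Equiv.ofBijective φ hbij, fun i => ?_⟩
  change e^[(i + 1).val] q = e (e^[i.val] q)
  have h1 : (i + 1).val = (i.val + 1) % Function.minimalPeriod e q := by
    rw [hmin, ZMod.val_add]
    rfl
  rw [h1, Function.iterate_mod_minimalPeriod_eq, Function.iterate_succ_apply']

/-- A Steiner triple system on `13` points, given by its collinearity relation `W`, with an
automorphism of order `13` is isomorphic to the standard cyclic `STS(13)`. -/
lemma exists_standard_labelling {P : Type u} [Fintype P] (hP : Fintype.card P = 13)
    {W : P → P → P → Prop} (h1 : ∀ {a b c}, W a b c → W b a c)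
    (h2 : ∀ {a b c}, W a b c → W a c b) (hne : ∀ {a b c}, W a b c → a ≠ b)
    (hex : ∀ a b, a ≠ b → ∃ c, W a b c) (huniq : ∀ {a b c d}, W a b c → W a b d → c = d)
    {e : Equiv.Perm P} (he : orderOf e = 13) (heW : ∀ a b c, W a b c → W (e a) (e b) (e c)) :
    ∃ ε : ZMod 13 ≃ P, ∀ i j, i ≠ j → W (ε i) (ε j) (ε (third i j)) := by
  obtain ⟨ε, hε⟩ := exists_cyclic_labelling hP he
  have hshift : ∀ t i j k : ZMod 13, W (ε i) (ε j) (ε k) →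
      W (ε (i + t)) (ε (j + t)) (ε (k + t)) := by
    intro t
    have hn : ∀ n : ℕ, ∀ i j k : ZMod 13, W (ε i) (ε j) (ε k) →
        W (ε (i + n)) (ε (j + n)) (ε (k + n)) := by
      intro n
      induction n with
      | zero => intro i j k h; simpa using h
      | succ n ih =>
        intro i j k h
        have := heW _ _ _ (ih i j k h)
        simpa only [← hε, Nat.cast_succ, add_assoc] using this
    have := hn t.val
    rwa [ZMod.natCast_zmod_val] at this
  have hd : ∀ k : ZMod 13, ∃ d, k ≠ 0 → W (ε 0) (ε k) (ε d) := by
    intro k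
    by_cases hk : k = 0
    · exact ⟨0, fun h => absurd hk h⟩
    · obtain ⟨c, hc⟩ := hex (ε 0) (ε k) (ε.injective.ne (Ne.symm hk))
      exact ⟨ε.symm c, fun _ => by rwa [ε.apply_symm_apply]⟩
  choose d hd using hd
  have hd0 : ∀ k, k ≠ 0 → d k ≠ 0 := fun k hk h =>
    hne (h2 (hd k hk)) (by rw [h])
  have hdk : ∀ k, k ≠ 0 → d k ≠ k := fun k hk h =>
    hne (h2 (h1 (hd k hk))) (by rw [h])
  obtain ⟨m, hm, hmd⟩ := exists_multiplier d hd0 hdk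
    (fun k hk => ε.injective (huniq (hd (d k) (hd0 k hk)) (h2 (hd k hk))))
    (fun k hk => by
      have h := hshift (-k) _ _ _ (h1 (hd k hk))
      rw [add_neg_cancel, zero_add, ← sub_eq_add_neg] at h
      exact ε.injective (huniq (hd (-k) (neg_ne_zero.2 hk)) h))
  have : Fact (Nat.Prime 13) := ⟨by norm_num⟩
  refine ⟨(Equiv.mulLeft₀ m hm).trans ε, fun i j hij => ?_⟩
  simp only [Equiv.trans_apply, Equiv.mulLeft₀_apply]
  have hji : j - i ≠ 0 := sub_ne_zero.2 hij.symm
  have h := hshift (m * i) _ _ _ (hd (m * (j - i)) (mul_ne_zero hm hji))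
  rw [hmd _ hji] at h
  convert h using 2
  · ring
  · ring
  · rw [third]; ring

section Frame

variable {α : Type u} [DecidableEq α] {T : Set (Finset α)} {x : α}

/-- The Veblen condition at `x`, read on fibres: if the points other than `x` come in pairs
`pt i 0, pt i 1` collinear with `x`, then changing two of the three levels of a triple by `1`
yields a triple. Hence all triples over `i, j, k` have the same sum of levels. -/
lemma IsVeblen.change_levels {ι : Type v} (hx : IsVeblen T x) {pt : ι → ZMod 2 → α}
    (hpt : ∀ i s, ({x, pt i s, pt i (s + 1)} : Finset α) ∈ T) {i j k : ι} {s t r : ZMod 2}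
    (h : ({pt i s, pt j t, pt k r} : Finset α) ∈ T) (s' t' : ZMod 2) :
    ({pt i s', pt j t', pt k (r + s + t + s' + t')} : Finset α) ∈ T := by
  have flip : ∀ {i j k : ι} {s t r : ZMod 2}, ({pt i s, pt j t, pt k r} : Finset α) ∈ T →
      ({pt i (s + 1), pt j (t + 1), pt k r} : Finset α) ∈ T := fun {i j k s t r} h =>
    triple_rotate (hx _ _ _ _ _ (hpt i s) (hpt j t) (triple_rotate (triple_rotate h)))
  have hcase : ∀ s s' : ZMod 2, s' = s ∨ s' = s + 1 := by decide
  have e1 : ∀ r s t : ZMod 2, r + s + t + s + t = r := by decide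
  have e2 : ∀ r s t : ZMod 2, r + s + t + s + (t + 1) = r + 1 := by decide
  have e3 : ∀ r s t : ZMod 2, r + s + t + (s + 1) + t = r + 1 := by decide
  have e4 : ∀ r s t : ZMod 2, r + s + t + (s + 1) + (t + 1) = r := by decide
  rcases hcase s s' with rfl | rfl <;> rcases hcase t t' with rfl | rfl
  · rwa [e1]
  · rw [e2]
    exact triple_rotate (triple_rotate (flip (triple_rotate h)))
  · rw [e3]
    exact triple_swap_right (flip (triple_swap_right h))
  · rw [e4]
    exact flip h

/-- Every pair of distinct points of `ZMod 13` lies in a translate of `{1, 3, 9}` or `{2, 5, 6}`,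
so a property of pairs which only depends on the block needs to be checked on the pairs
`(i + 1, i + 3)` and `(i + 2, i + 5)`. -/
lemma pair_generation {Pr : ZMod 13 → ZMod 13 → Prop}
    (hswap : ∀ i j, Pr i j → Pr j i) (hthird : ∀ i j, i ≠ j → Pr i j → Pr i (third i j))
    (hfirst : ∀ i, Pr (i + 1) (i + 3)) (hsecond : ∀ i, Pr (i + 2) (i + 5))
    (i j : ZMod 13) (hij : i ≠ j) : Pr i j := by
  have key : ∀ i j : ZMod 13, i ≠ j → ∃ a b, a ≠ b ∧
      ((∃ m, (a = m + 1 ∧ b = m + 3) ∨ (a = m + 2 ∧ b = m + 5))) ∧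
      ((i = a ∧ j = b) ∨ (i = b ∧ j = a) ∨ (i = a ∧ j = third a b) ∨ (i = third a b ∧ j = a) ∨
        (i = b ∧ j = third b a) ∨ (i = third b a ∧ j = b)) := by
    decide +kernel
  obtain ⟨a, b, hab, ⟨m, hm⟩, h⟩ := key i j hij
  have hPr : Pr a b := by
    rcases hm with ⟨rfl, rfl⟩ | ⟨rfl, rfl⟩
    · exact hfirst m
    · exact hsecond m
  rcases h with ⟨rfl, rfl⟩ | ⟨rfl, rfl⟩ | ⟨rfl, rfl⟩ | ⟨rfl, rfl⟩ | ⟨rfl, rfl⟩ | ⟨rfl, rfl⟩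
  · exact hPr
  · exact hswap _ _ hPr
  · exact hthird _ _ hab hPr
  · exact hswap _ _ (hthird _ _ hab hPr)
  · exact hthird _ _ hab.symm (hswap _ _ hPr)
  · exact hswap _ _ (hthird _ _ hab.symm (hswap _ _ hPr))

/-- Normalisation of the levels. For an arbitrary labelling of the fibres the system is described by
a function `C` on the blocks of the cyclic `STS(13)`; exchanging the two labels over the points `i`
with `g i = 1` changes `C` by the sum of `g` over the block, and `g` can be chosen so that `C`
becomes `0` on all translates of `{1, 3, 9}`. -/
lemma exists_framed_of_labelling (hT : IsSTS T) (hx : IsVeblen T x) (pt : ZMod 13 → ZMod 2 → α)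
    (hpt : ∀ i s, ({x, pt i s, pt i (s + 1)} : Finset α) ∈ T)
    (hinj : ∀ i s j t, pt i s = pt j t → i = j ∧ s = t) (hsurj : ∀ y, y ≠ x → ∃ i s, pt i s = y)
    (hblock : ∀ i j, i ≠ j → ∃ r, ({pt i 0, pt j 0, pt (third i j) r} : Finset α) ∈ T) :
    ∃ p f, Framed T p f := by
  have hC : ∀ i j, ∃ r, i ≠ j → ({pt i 0, pt j 0, pt (third i j) r} : Finset α) ∈ T := by
    intro i j
    by_cases hij : i = j
    · exact ⟨0, fun h => absurd hij h⟩
    · obtain ⟨r, hr⟩ := hblock i j hij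
      exact ⟨r, fun _ => hr⟩
  choose C hC using hC
  -- The coefficients are those of the inverse circulant, see `circulant_inverse`.
  let g : ZMod 13 → ZMod 2 := fun i =>
    (([0, 2, 4, 5, 6, 10, 12] : List (ZMod 13)).map fun j => C (i + j + 1) (i + j + 3)).sum
  have hg : ∀ i, g (i + 1) + g (i + 3) + g (i + 9) = C (i + 1) (i + 3) := by
    intro i
    rw [← circulant_inverse (fun i => C (i + 1) (i + 3)) i]
    simp only [g, List.map_cons, List.map_nil, List.sum_cons, List.sum_nil]
    simp only [add_right_comm i _ (_ : ZMod 13)]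
    ring
  let f : ZMod 13 → ZMod 2 := fun i => C (i + 2) (i + 5) + g (i + 2) + g (i + 5) + g (i + 6)
  let pt' : ZMod 13 → ZMod 2 → α := fun i s => pt i (s + g i)
  have hpt' : ∀ i s, ({x, pt' i s, pt' i (s + 1)} : Finset α) ∈ T := by
    intro i s
    simp only [pt', add_right_comm s 1]
    exact hpt i _
  have hbase : ∀ i j, i ≠ j →
      ({pt' i 0, pt' j 0, pt' (third i j) (C i j + g i + g j + g (third i j))} : Finset α) ∈ T := by
    intro i j hij
    have := hx.change_levels hpt (hC i j hij) (g i) (g j)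
    simp only [pt', zero_add]
    convert this using 5
    generalize C i j = c; generalize g i = a; generalize g j = b; generalize g (third i j) = d
    revert a b c d; decide
  have hall : ∀ i j, i ≠ j →
      ({pt' i 0, pt' j 0, pt' (third i j) (blockVal f i j)} : Finset α) ∈ T := by
    intro i j hij
    refine pair_generation (Pr := fun i j => i ≠ j →
      ({pt' i 0, pt' j 0, pt' (third i j) (blockVal f i j)} : Finset α) ∈ T)
      ?_ ?_ ?_ ?_ i j hij hij
    · intro i j h hji
      rw [third_comm, blockVal_comm]
      exact triple_swap_left (h hji.symm)
    · intro i j hij h _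
      rw [third_third, blockVal_third]
      have := hx.change_levels hpt' (triple_swap_right (h hij)) 0 0
      simpa using this
    · intro i hi
      have := hbase _ _ hi
      rw [(third_first i).2, add_assoc, add_assoc, ← add_assoc (g (i + 1)), hg,
        CharTwo.add_self_eq_zero] at this
      rwa [(third_first i).2, blockVal_first]
    · intro i hi
      have := hbase _ _ hi
      rw [(third_second i).2] at this
      rwa [(third_second i).2, blockVal_second]
  have hpx : ∀ i s, pt' i s ≠ x := fun i s h => (hT.ne (hpt' i s)).1 h.symm
  let φ : Pt → α := fun a => a.elim x fun y => pt' y.1 y.2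
  have hφ : Function.Bijective φ := by
    constructor
    · rintro (_ | ⟨i, s⟩) (_ | ⟨j, t⟩) h
      · rfl
      · exact absurd h.symm (hpx j t)
      · exact absurd h (hpx i s)
      · obtain ⟨hij, hst⟩ := hinj i (s + g i) j (t + g j) h
        subst hij
        rw [add_right_cancel hst]
    · intro y
      by_cases hy : y = x
      · exact ⟨none, hy.symm⟩
      · obtain ⟨i, s, rfl⟩ := hsurj y hy
        refine ⟨some (i, s - g i), ?_⟩
        change pt i (s - g i + g i) = pt i s
        rw [sub_add_cancel]
  refine ⟨Equiv.ofBijective φ hφ, f, hT, ?_⟩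
  rintro (_ | ⟨i, s⟩) (_ | ⟨j, t⟩) hab
  · exact absurd rfl hab
  · exact hpt' j t
  · exact triple_swap_left (hpt' i s)
  · by_cases hij : i = j
    · subst hij
      have hst : s ≠ t := by rintro rfl; exact hab rfl
      rw [thirdPt_of_eq f i hst, ← add_one_of_ne s t hst]
      exact triple_rotate (hpt' i s)
    · rw [thirdPt_of_ne f hij]
      have := hx.change_levels hpt' (hall i j hij) s t
      change ({pt' i s, pt' j t, pt' (third i j) (s + t + blockVal f i j)} : Finset α) ∈ T
      convert this using 5
      ring

/-- Every Steiner triple system of order `27` with a Veblen point whose quotient has an automorphism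
of order `13` is isomorphic to a model system. -/
lemma exists_framed [Fintype α] (hα : Fintype.card α = 27) (hT : IsSTS T) (hx : IsVeblen T x)
    (e : Equiv.Perm (QuotPts T x))
    (heT : ∀ b : Finset (QuotPts T x), b ∈ QuotTriples T x ↔
      b.image (e : QuotPts T x → QuotPts T x) ∈ QuotTriples T x)
    (he : orderOf e = 13) : ∃ p f, Framed T p f := by
  classical
  have hbc : ∀ q : QuotPts T x, ∃ b c, q.1 = {x, b, c} := fun q =>
    exists_triple_of_mem (hT.1 _ q.2.1) q.2.2
  choose b c hq using hbc
  let pt : QuotPts T x → ZMod 2 → α := fun q s => if s = 0 then b q else c q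
  have hpt0 : ∀ q, pt q 0 = b q := fun q => rfl
  have hpt1 : ∀ q, pt q 1 = c q := fun q => rfl
  have hqT : ∀ q, ({x, b q, c q} : Finset α) ∈ T := fun q => hq q ▸ q.2.1
  have hpt : ∀ q s, ({x, pt q s, pt q (s + 1)} : Finset α) ∈ T := by
    intro q s
    rcases zmod_two_cases s with rfl | rfl
    · exact hqT q
    · exact triple_swap_right (hqT q)
  have hptx : ∀ q s, pt q s ≠ x := fun q s h => (hT.ne (hpt q s)).1 h.symm
  have hmem : ∀ q y, y ∈ q.1 → y ≠ x → ∃ s, pt q s = y := by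
    intro q y hy hyx
    rw [hq q] at hy
    simp only [Finset.mem_insert, Finset.mem_singleton] at hy
    rcases hy with rfl | rfl | rfl
    · exact absurd rfl hyx
    · exact ⟨0, rfl⟩
    · exact ⟨1, rfl⟩
  have hmem' : ∀ q s, pt q s ∈ q.1 := by
    intro q s
    rw [hq q]
    rcases zmod_two_cases s with rfl | rfl <;> simp [hpt0, hpt1]
  have hinj : ∀ q s q' s', pt q s = pt q' s' → q = q' ∧ s = s' := by
    intro q s q' s' h
    have hqq : q = q' := Subtype.ext ((hT.2 x (pt q s) (hptx q s).symm).unique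
      ⟨q.2.1, q.2.2, hmem' q s⟩ ⟨q'.2.1, q'.2.2, h ▸ hmem' q' s'⟩)
    subst hqq
    refine ⟨rfl, ?_⟩
    by_contra hs
    exact (hT.ne (hpt q s)).2.2 (by rw [add_one_of_ne _ _ hs, h])
  have hsurj : ∀ y, y ≠ x → ∃ q s, pt q s = y := by
    intro y hy
    obtain ⟨t, ⟨ht, hxt, hyt⟩, -⟩ := hT.2 x y hy.symm
    exact ⟨⟨t, ht, hxt⟩, hmem _ y hyt hy⟩
  have hcard : Fintype.card (QuotPts T x) = 13 := by
    let φ : Option (QuotPts T x × ZMod 2) → α := fun a => a.elim x fun y => pt y.1 y.2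
    have hφ : Function.Bijective φ := by
      constructor
      · rintro (_ | ⟨i, s⟩) (_ | ⟨j, t⟩) h
        · rfl
        · exact absurd h.symm (hptx j t)
        · exact absurd h (hptx i s)
        · obtain ⟨rfl, rfl⟩ := hinj _ _ _ _ (h : pt i s = pt j t)
          rfl
      · intro y
        by_cases hy : y = x
        · exact ⟨none, hy.symm⟩
        · obtain ⟨i, s, rfl⟩ := hsurj y hy
          exact ⟨some (i, s), rfl⟩
    have := Fintype.card_of_bijective hφ
    rw [hα, Fintype.card_option, Fintype.card_prod, ZMod.card] at this
    omega
  -- The two points other than `x` on a triple through `x` lie in the same fibre of `pt`.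
  have hfib : ∀ q q' s t, ({pt q s, pt q' t, x} : Finset α) ∈ T → q = q' := by
    intro q q' s t h
    have := hT.unique (triple_rotate (triple_rotate h)) (hpt q s)
    exact ((hinj _ _ _ _ this).1).symm
  -- Collinearity in the quotient, tested on the level `0` representatives.
  let W : QuotPts T x → QuotPts T x → QuotPts T x → Prop := fun q₁ q₂ q₃ =>
    q₁ ≠ q₂ ∧ ∃ r, ({pt q₁ 0, pt q₂ 0, pt q₃ r} : Finset α) ∈ T
  have W1 : ∀ {q₁ q₂ q₃}, W q₁ q₂ q₃ → W q₂ q₁ q₃ := by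
    rintro q₁ q₂ q₃ ⟨hne, r, h⟩
    exact ⟨hne.symm, r, triple_swap_left h⟩
  have W2 : ∀ {q₁ q₂ q₃}, W q₁ q₂ q₃ → W q₁ q₃ q₂ := by
    rintro q₁ q₂ q₃ ⟨hne, r, h⟩
    refine ⟨?_, _, hx.change_levels hpt (triple_swap_right h) 0 0⟩
    rintro rfl
    rcases zmod_two_cases r with rfl | rfl
    · exact (hT.ne h).2.1 rfl
    · exact hptx q₂ 0 (hT.unique (triple_swap_right h) (triple_rotate (hpt q₁ 0)))
  have Wex : ∀ q₁ q₂, q₁ ≠ q₂ → ∃ q₃, W q₁ q₂ q₃ := by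
    intro q₁ q₂ hne
    obtain ⟨z, hz⟩ := hT.exists_third (a := pt q₁ 0) (b := pt q₂ 0)
      fun h => hne (hinj _ _ _ _ h).1
    have hzx : z ≠ x := by
      rintro rfl
      exact hne (hfib _ _ _ _ hz)
    obtain ⟨q₃, r, rfl⟩ := hsurj z hzx
    exact ⟨q₃, hne, r, hz⟩
  have Wuniq : ∀ {q₁ q₂ q₃ q₄}, W q₁ q₂ q₃ → W q₁ q₂ q₄ → q₃ = q₄ := by
    rintro q₁ q₂ q₃ q₄ ⟨-, r, h⟩ ⟨-, r', h'⟩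
    exact (hinj _ _ _ _ (hT.unique h h')).1
  have hW : ∀ q₁ q₂ q₃ : QuotPts T x,
      ({q₁, q₂, q₃} : Finset (QuotPts T x)) ∈ QuotTriples T x ↔ W q₁ q₂ q₃ := by
    intro q₁ q₂ q₃
    constructor
    · rintro ⟨T1, T2, T3, h12, h13, h23, heq, a, ha, hax, c, hc, hcx, d, hd, hd3⟩
      refine rel_of_insert_eq (W := W) W1 W2 h12 h13 h23 heq.symm ⟨h12, ?_⟩
      obtain ⟨s, rfl⟩ := hmem _ _ ha hax
      obtain ⟨t, rfl⟩ := hmem _ _ hc hcx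
      have hdx : d ≠ x := by
        rintro rfl
        exact h12 (hfib _ _ _ _ hd)
      obtain ⟨r, rfl⟩ := hmem _ _ hd3 hdx
      exact ⟨_, hx.change_levels hpt hd 0 0⟩
    · intro h
      have ⟨h12, r, hr⟩ := h
      exact ⟨q₁, q₂, q₃, h12, (W2 h).1, (W2 (W1 h)).1, rfl, _, hmem' q₁ 0, hptx _ _, _, hmem' q₂ 0,
        hptx _ _, _, hr, hmem' q₃ r⟩
  obtain ⟨ε, hε⟩ := exists_standard_labelling hcard (W := W) W1 W2 (fun h => h.1) Wex Wuniq he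
    (fun q₁ q₂ q₃ h => by
      have := (heT _).1 ((hW _ _ _).2 h)
      simp only [Finset.image_insert, Finset.image_singleton] at this
      exact (hW _ _ _).1 this)
  refine exists_framed_of_labelling hT hx (fun i => pt (ε i)) (fun i => hpt (ε i)) ?_ ?_
    (fun i j hij => (hε i j hij).2)
  · intro i s j t h
    obtain ⟨h1, h2⟩ := hinj _ _ _ _ h
    exact ⟨ε.injective h1, h2⟩
  · intro y hy
    obtain ⟨q, s, rfl⟩ := hsurj y hy
    exact ⟨ε.symm q, s, by simp⟩

end Frame

/-! ### Counting colourings -/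

/-- The automorphism group of the cyclic `STS(13)`: the maps `x ↦ m * x + t` with `m ^ 3 = 1`. -/
def affineGroup : Subgroup (Equiv.Perm (ZMod 13)) where
  carrier := {σ | ∃ m t : ZMod 13, m ^ 3 = 1 ∧ ∀ x, σ x = m * x + t}
  one_mem' := ⟨1, 0, by decide, fun x => by simp⟩
  mul_mem' := by
    rintro σ τ ⟨m, t, hm, hσ⟩ ⟨n, s, hn, hτ⟩
    refine ⟨m * n, m * s + t, by rw [mul_pow, hm, hn, one_mul], fun x => ?_⟩
    rw [Equiv.Perm.mul_apply, hτ, hσ]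
    ring
  inv_mem' := by
    rintro σ ⟨m, t, hm, hσ⟩
    refine ⟨m ^ 2, -m ^ 2 * t, by rw [← pow_mul, mul_comm, pow_mul, hm, one_pow], fun x => ?_⟩
    rw [Equiv.Perm.inv_eq_iff_eq, hσ]
    linear_combination (-x + t) * hm

/-- The permutation `x ↦ m * x + t`; the inverse of `m` is `m ^ 2`. -/
def affinePerm (m : {m : ZMod 13 // m ^ 3 = 1}) (t : ZMod 13) : Equiv.Perm (ZMod 13) where
  toFun x := m.1 * x + t
  invFun x := m.1 ^ 2 * (x - t)
  left_inv x := by linear_combination x * m.2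
  right_inv x := by linear_combination (x - t) * m.2

/-- The parametrisation of `affineGroup` by multiplier and translation. -/
noncomputable def affineEquiv : {m : ZMod 13 // m ^ 3 = 1} × ZMod 13 ≃ affineGroup :=
  Equiv.ofBijective (fun y => ⟨affinePerm y.1 y.2, y.1.1, y.2, y.1.2, fun _ => rfl⟩) <| by
    constructor
    · rintro ⟨⟨m, hm⟩, t⟩ ⟨⟨n, hn⟩, s⟩ h
      have h' : ∀ x, m * x + t = n * x + s := fun x => Equiv.ext_iff.1 (congrArg Subtype.val h) x
      have h0 := h' 0
      have h1 := h' 1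
      simp only [mul_zero, zero_add, mul_one] at h0 h1
      subst h0
      obtain rfl := add_right_cancel h1
      rfl
    · rintro ⟨σ, m, t, hm, hσ⟩
      exact ⟨(⟨m, hm⟩, t), Subtype.ext (Equiv.ext fun x => (hσ x).symm)⟩

/-- The action on colourings by translation of the argument, `(σ • f) x = f (σ⁻¹ x)`. -/
instance colouringAction : MulAction affineGroup (ZMod 13 → ZMod 2) := arrowAction

lemma colouring_smul_apply (σ : affineGroup) (f : ZMod 13 → ZMod 2) (x : ZMod 13) :
    (σ • f) x = f (σ⁻¹.1 x) := rfl

lemma orbitRel_iff (f g : ZMod 13 → ZMod 2) :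
    MulAction.orbitRel affineGroup (ZMod 13 → ZMod 2) f g ↔
      ∃ σ : affineGroup, ∀ x, f x = g (σ.1 x) := by
  rw [MulAction.orbitRel_apply]
  constructor
  · rintro ⟨σ, rfl⟩
    exact ⟨σ⁻¹, fun x => rfl⟩
  · rintro ⟨σ, h⟩
    refine ⟨σ⁻¹, funext fun x => ?_⟩
    simp only [colouring_smul_apply, inv_inv, h]

lemma mem_fixedBy_iff (m : {m : ZMod 13 // m ^ 3 = 1}) (t : ZMod 13) (f : ZMod 13 → ZMod 2) :
    f ∈ MulAction.fixedBy (ZMod 13 → ZMod 2) (affineEquiv (m, t)) ↔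
      ∀ x, f (m.1 * x + t) = f x := by
  rw [MulAction.mem_fixedBy]
  have hval : ∀ x, (affineEquiv (m, t)).1 x = m.1 * x + t := fun _ => rfl
  constructor
  · intro h x
    have := congrFun h (m.1 * x + t)
    rw [colouring_smul_apply, ← hval] at this
    rw [← hval, ← this]
    exact congrArg f (Equiv.symm_apply_apply _ x)
  · intro h
    funext x
    rw [colouring_smul_apply, ← h, ← hval]
    simp

/-- Only the constant colourings are fixed by a non-trivial translation. -/
lemma card_translation_fixed {t : ZMod 13} (ht : t ≠ 0) :
    Nat.card {f : ZMod 13 → ZMod 2 // ∀ x, f (x + t) = f x} = 2 := by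
  have hconst : ∀ f : ZMod 13 → ZMod 2, (∀ x, f (x + t) = f x) → ∀ x, f x = f 0 := by
    intro f hf x
    have hn : ∀ n : ℕ, f (n * t) = f 0 := by
      intro n
      induction n with
      | zero => simp
      | succ n ih => rw [← ih, ← hf (n * t)]; congr 1; push_cast; ring
    have hx : ∀ t x : ZMod 13, t ≠ 0 → ∃ n : Fin 13, ((n : ℕ) : ZMod 13) * t = x := by
      decide +kernel
    obtain ⟨n, rfl⟩ := hx t x ht
    exact hn n
  have e : {f : ZMod 13 → ZMod 2 // ∀ x, f (x + t) = f x} ≃ ZMod 2 :=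
    { toFun := fun f => f.1 0
      invFun := fun c => ⟨fun _ => c, fun _ => rfl⟩
      left_inv := fun f => Subtype.ext (funext fun x => (hconst f.1 f.2 x).symm)
      right_inv := fun c => rfl }
  rw [Nat.card_congr e, Nat.card_zmod]

/-- The orbits of `ZMod 13` under multiplication by `1, 3, 9`, which are `{0}`, `{1, 3, 9}`,
`{2, 5, 6}`, `{4, 10, 12}` and `{7, 8, 11}`, numbered from `0` to `4`. -/
def cubicClass : ZMod 13 → Fin 5 :=
  fun k : Fin 13 => (![0, 1, 2, 1, 3, 2, 2, 4, 4, 1, 3, 4, 3] : Fin 13 → Fin 5) k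

lemma cubicClass_surjective : Function.Surjective cubicClass := by decide +kernel

/-- A map `x ↦ m * x + t` with `m` of order `3` has a fixed point `z`, and its orbits are the
`z`-translates of the five classes of `cubicClass`; this leaves `2 ^ 5` invariant colourings. -/
lemma card_multiplier_fixed {m : ZMod 13} (hm : m ^ 3 = 1) (hm1 : m ≠ 1) (t : ZMod 13) :
    Nat.card {f : ZMod 13 → ZMod 2 // ∀ x, f (m * x + t) = f x} = 32 := by
  obtain ⟨z, hz⟩ : ∃ z, m * z + t = z := by
    have : ∀ m t : ZMod 13, m ≠ 1 → ∃ z, m * z + t = z := by decide +kernel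
    exact this m t hm1
  have hclass : ∀ x y : ZMod 13, cubicClass x = cubicClass y ↔
      (y = x ∨ y = m * x ∨ y = m * (m * x)) := by
    have : ∀ m : ZMod 13, m ^ 3 = 1 → m ≠ 1 → ∀ x y : ZMod 13, cubicClass x = cubicClass y ↔
      (y = x ∨ y = m * x ∨ y = m * (m * x)) := by decide +kernel
    exact this m hm hm1
  have hshift : ∀ x, m * x + t - z = m * (x - z) := fun x => by linear_combination hz
  have hinv : ∀ f : ZMod 13 → ZMod 2, (∀ x, f (m * x + t) = f x) →
      ∀ x, f (m * x + z) = f (x + z) := by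
    intro f hf x
    rw [← hf (x + z)]
    congr 1
    linear_combination -hz
  choose r hr using cubicClass_surjective
  have e : {f : ZMod 13 → ZMod 2 // ∀ x, f (m * x + t) = f x} ≃ (Fin 5 → ZMod 2) :=
    { toFun := fun f c => f.1 (r c + z)
      invFun := fun c => ⟨fun x => c (cubicClass (x - z)), fun x => by
        change c (cubicClass (m * x + t - z)) = c (cubicClass (x - z))
        rw [hshift, (hclass (x - z) (m * (x - z))).2 (Or.inr (Or.inl rfl))]⟩
      left_inv := fun f => Subtype.ext (funext fun x => by
        have h1 := (hclass (r (cubicClass (x - z))) (x - z)).1 (hr _)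
        have hi := hinv f.1 f.2
        change f.1 (r (cubicClass (x - z)) + z) = f.1 x
        conv_rhs => rw [← sub_add_cancel x z]
        rcases h1 with h | h | h
        · rw [← h]
        · rw [h, hi, ← h]
        · rw [h, hi, hi, ← h])
      right_inv := fun c => funext fun k => by simp [hr] }
  rw [Nat.card_congr e]
  simp

/-- Burnside count of colourings: `(8192 + 12 * 2 + 26 * 32) / 39 = 9048 / 39 = 232`. -/
lemma card_colourings : Nat.card (Quotient (MulAction.orbitRel affineGroup (ZMod 13 → ZMod 2))) =
    232 := by
  classical
  have : Fintype affineGroup := Fintype.ofEquiv _ affineEquiv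
  have hB := MulAction.sum_card_fixedBy_eq_card_orbits_mul_card_group affineGroup
    (ZMod 13 → ZMod 2)
  have hG : Fintype.card affineGroup = 39 := by
    rw [← Fintype.card_congr affineEquiv]
    decide +kernel
  have hfix : ∀ m : {m : ZMod 13 // m ^ 3 = 1}, ∀ t,
      Fintype.card (MulAction.fixedBy (ZMod 13 → ZMod 2) (affineEquiv (m, t))) =
        if m.1 = 1 then if t = 0 then 8192 else 2 else 32 := by
    intro m t
    rw [← Nat.card_eq_fintype_card, Nat.card_congr (Equiv.subtypeEquivRight (mem_fixedBy_iff m t))]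
    split_ifs with h1 h2
    · simp [h1, h2]
    · simp only [h1, one_mul]
      exact card_translation_fixed h2
    · exact card_multiplier_fixed m.2 h1 t
  rw [hG, ← affineEquiv.sum_comp, Fintype.sum_prod_type] at hB
  simp only [hfix] at hB
  have hsum : (∑ m : {m : ZMod 13 // m ^ 3 = 1}, ∑ t : ZMod 13,
      if m.1 = 1 then if t = 0 then 8192 else 2 else 32) = 9048 := by decide +kernel
  rw [hsum] at hB
  rw [Nat.card_eq_fintype_card]
  omega

/-- There are exactly 232 isomorphism classes of Steiner triple systems of
order 27 with exactly one Veblen point `x` whose quotient system at `x` admits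
an automorphism of order 13 (i.e. the quotient is the cyclic `STS(13)`). -/
theorem sts27_cyclic_quotient_count :
    Nat.card (Quot (fun S₁ S₂ : {T : Set (Finset (Fin 27)) //
        IsSTS T ∧ ∃ x : Fin 27, (∀ y : Fin 27, IsVeblen T y ↔ y = x) ∧
          ∃ e : Equiv.Perm (QuotPts T x),
              (∀ b : Finset (QuotPts T x),
                b ∈ QuotTriples T x ↔ b.image (e : QuotPts T x → QuotPts T x) ∈ QuotTriples T x) ∧
              orderOf e = 13} => STSIso S₁.1 S₂.1)) = 232 := by
  rw [← card_colourings]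
  have hframe : ∀ S : {T : Set (Finset (Fin 27)) //
        IsSTS T ∧ ∃ x : Fin 27, (∀ y : Fin 27, IsVeblen T y ↔ y = x) ∧
          ∃ e : Equiv.Perm (QuotPts T x),
              (∀ b : Finset (QuotPts T x),
                b ∈ QuotTriples T x ↔ b.image (e : QuotPts T x → QuotPts T x) ∈ QuotTriples T x) ∧
              orderOf e = 13}, ∃ p f, Framed S.1 p f := by
    rintro ⟨T, hT, x, hx, e, heT, he⟩
    exact exists_framed (by simp) hT ((hx x).2 rfl) e heT he
  choose p f hf using hframe
  have hiso : ∀ S₁ S₂, STSIso S₁.1 S₂.1 ↔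
      MulAction.orbitRel affineGroup (ZMod 13 → ZMod 2) (f S₁) (f S₂) := by
    intro S₁ S₂
    rw [orbitRel_iff]
    constructor
    · intro h
      obtain ⟨m, t, hm, hfg⟩ := (hf S₁).affine_of_iso (hf S₂) h
      exact ⟨affineEquiv (⟨m, hm⟩, t), hfg⟩
    · rintro ⟨⟨σ, m, t, hm, hσ⟩, hfg⟩
      exact (hf S₁).iso_of_affine (hf S₂) σ hm hσ hfg
  refine Nat.card_congr (Equiv.ofBijective
    (Quot.lift (fun S => Quotient.mk (MulAction.orbitRel affineGroup (ZMod 13 → ZMod 2)) (f S))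
      fun S₁ S₂ h => Quotient.sound ((hiso S₁ S₂).1 h)) ⟨?_, ?_⟩)
  · rintro ⟨S₁⟩ ⟨S₂⟩ h
    exact Quot.sound ((hiso S₁ S₂).2 (Quotient.exact h))
  · rintro ⟨g⟩
    have hcard : Fintype.card Pt = Fintype.card (Fin 27) := by
      simp [Fintype.card_option, Fintype.card_prod, ZMod.card]
    have hg := framed_modelTriples (Fintype.equivOfCardEq hcard) g
    refine ⟨Quot.mk _ ⟨modelTriples g (Fintype.equivOfCardEq hcard), hg.sts, _, hg.isVeblen_iff,
      hg.exists_aut⟩, Quotient.sound ?_⟩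
    obtain ⟨m, t, hm, hfg⟩ := (hf ⟨modelTriples g (Fintype.equivOfCardEq hcard), hg.sts, _,
      hg.isVeblen_iff, hg.exists_aut⟩).affine_of_iso hg ⟨Equiv.refl _, fun t => by simp⟩
    exact (orbitRel_iff _ _).2 ⟨affineEquiv (⟨m, hm⟩, t), hfg⟩
end
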